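/- The validity problem for VLDL is decidable: there is a computable function that, given (a natural effective encoding, with states, stack symbols, and atomic propositions drawn from ℕ, of) a VLDL formula φ over a pushdown alphabet Σ̃ partitioning 2^P, decides whether L(φ) = (2^P)^ω, i.e., whether every infinite word over 2^P is a model of φ. -/

import Mathlib

/-!
A formula that is violated by some infinite word is already violated by an ultimately periodic word
`u v v v …` whose length is bounded by an explicit primitive recursive function of the size of the
formula. On such words formulas can be evaluated effectively, so validity is decided by testing all
ultimately periodic words up to the bound.

**Small countermodels** (`VP.small_countermodel`). Label every position of a word with the truth
values of all formulas there. Each temporal subformula yields a pushdown system over labelled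
letters (`VP.gsys`) with an absorbing state `none` that is reached exactly by the accepting runs of
its guard; a box is treated as the negation of a diamond. A labelling is the labelling by the actual
truth values as soon as it is coherent (`VP.Coh`, `VP.sat_iff_ev`): for each temporal subformula,
each position claims the formula to be true iff some run started there reaches `none`.

To a finite factor of a labelled word one attaches a finite invariant (`VP.Sys.ty`): the state
transformation of the factor from the empty stack, and the claims that were opened inside it,
each with the set of states reached by the corresponding runs. This invariant is compositional under
concatenation of factors when no call of the first is matched in the second, and under enclosing a
well-matched factor in a call and its return (`VP.ty_append`, `VP.ty_nest`). Factors without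
unmatched calls and factors without unmatched returns are generated by these two operations
(`VP.Der`), so every factor can be replaced by one of bounded length with the same invariant
(`VP.small_rep`). Every infinite word has infinitely many cuts such that all factors between
them are of one such mode (`VP.exists_cuts`). The pigeonhole principle gives two cuts with the same
invariant that are so far apart that all true claims open at the first one are fulfilled before the second.
Replacing the prefix up to the first cut and the factor between the cuts by short representatives
gives words `u` and `v` with `u v v v …` coherent (`VP.coh_lasso`, `VP.small_model`).

**Evaluation** (`VP.sat_iff_table`). On an ultimately periodic word, the truth value of a formula
depends only on the position in the finite word representing it, so it is stored in a finite truth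
table. The product of a guard with the set of positions is a pushdown system, and the
representation by short words, applied to sequences of kinds of letters, bounds the length of
shortest accepting runs (`VP.pacc_bound`). A bounded search over configurations therefore computes
the truth table of a temporal formula from those of its tests and its goal. Truth tables are
computed by course-of-values recursion on codes (`VP.table`), and all functions involved are
primitive recursive.
-/

/-- The three kinds of letters of a pushdown alphabet: calls, returns, local actions. -/
inductive SymKind : Type
  | call | ret | loc
deriving DecidableEq

/-- The data of a visibly pushdown automaton with states `Fin n` and stack alphabet
`Fin m` (plus an implicit bottom marker `⊥`, represented by the empty stack):
call-, return- and local transitions, initial states and final states. -/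
structure VPAData (A : Type) (n m : ℕ) where
  callΔ : Fin n → A → Fin n → Fin m → Bool
  retΔ  : Fin n → A → Option (Fin m) → Fin n → Bool
  locΔ  : Fin n → A → Fin n → Bool
  start : Fin n → Bool
  final : Fin n → Bool

/-- One step of a visibly pushdown system on configurations (state, stack). Calls push,
returns pop (reading `⊥`, i.e. `none`, on the empty stack and leaving it unchanged),
local actions leave the stack unchanged. -/
def vstep {A : Type} (kind : A → SymKind) {n m : ℕ}
    (callΔ : Fin n → A → Fin n → Fin m → Bool)
    (retΔ : Fin n → A → Option (Fin m) → Fin n → Bool)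
    (locΔ : Fin n → A → Fin n → Bool) :
    Fin n × List (Fin m) → A → Fin n × List (Fin m) → Prop :=
  fun c a c' =>
    match kind a with
    | .call => ∃ g, callΔ c.1 a c'.1 g = true ∧ c'.2 = g :: c.2
    | .ret => (∃ g s, c.2 = g :: s ∧ retΔ c.1 a (some g) c'.1 = true ∧ c'.2 = s) ∨
        (c.2 = [] ∧ retΔ c.1 a none c'.1 = true ∧ c'.2 = [])
    | .loc => locΔ c.1 a c'.1 = true ∧ c'.2 = c.2

def VPAData.step {A : Type} {n m : ℕ} (M : VPAData A n m) (kind : A → SymKind) :=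
  vstep kind M.callΔ M.retΔ M.locΔ

/-- Büchi acceptance for a visibly pushdown automaton: some initial infinite run
starting with empty stack visits final states infinitely often. -/
def VPAData.BuchiAccepts {A : Type} {n m : ℕ} (M : VPAData A n m) (kind : A → SymKind)
    (α : ℕ → A) : Prop :=
  ∃ ρ : ℕ → Fin n × List (Fin m),
    M.start (ρ 0).1 = true ∧ (ρ 0).2 = [] ∧
    (∀ i, M.step kind (ρ i) (α i) (ρ (i+1))) ∧
    (∀ i, ∃ j, i ≤ j ∧ M.final (ρ j).1 = true)

/-- VLDL formulas: atoms (from `V`), Boolean connectives, and temporal operators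
`⟨A⟩φ`/`[A]φ` guarded by testing visibly pushdown automata over the alphabet `A`;
the guard is given by its `VPAData` together with the map `t` assigning a test
formula to every state. -/
inductive VLDL (V A : Type) : Type
  | atom (v : V)
  | neg (φ : VLDL V A)
  | and (φ ψ : VLDL V A)
  | or (φ ψ : VLDL V A)
  | dia (n m : ℕ) (M : VPAData A n m) (t : Fin n → VLDL V A) (φ : VLDL V A)
  | box (n m : ℕ) (M : VPAData A n m) (t : Fin n → VLDL V A) (φ : VLDL V A)

/-- Satisfaction of VLDL formulas on infinite words `α : ℕ → A` at a position `k`,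
where `val v a` states that atom `v` holds at letter `a`. The guard relation
`(k, l) ∈ R_A(α)` is inlined: there is an initial accepting run of the guard on
`α_k ⋯ α_{l-1}` all of whose states' tests are satisfied at the respective positions. -/
def VLDL.sat {V A : Type} (val : V → A → Prop) (kind : A → SymKind) :
    VLDL V A → (ℕ → A) → ℕ → Prop
  | .atom v, α, k => val v (α k)
  | .neg φ, α, k => ¬ VLDL.sat val kind φ α k
  | .and φ ψ, α, k => VLDL.sat val kind φ α k ∧ VLDL.sat val kind ψ α k
  | .or φ ψ, α, k => VLDL.sat val kind φ α k ∨ VLDL.sat val kind ψ α k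
  | .dia n m M t φ, α, k => ∃ l, k ≤ l ∧
      (∃ ρ : ℕ → Fin n × List (Fin m),
        M.start (ρ k).1 = true ∧ (ρ k).2 = [] ∧
        (∀ i, k ≤ i → i < l → M.step kind (ρ i) (α i) (ρ (i+1))) ∧
        M.final (ρ l).1 = true ∧
        (∀ i, k ≤ i → i ≤ l → VLDL.sat val kind (t (ρ i).1) α i)) ∧
      VLDL.sat val kind φ α l
  | .box n m M t φ, α, k => ∀ l, k ≤ l →
      (∃ ρ : ℕ → Fin n × List (Fin m),
        M.start (ρ k).1 = true ∧ (ρ k).2 = [] ∧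
        (∀ i, k ≤ i → i < l → M.step kind (ρ i) (α i) (ρ (i+1))) ∧
        M.final (ρ l).1 = true ∧
        (∀ i, k ≤ i → i ≤ l → VLDL.sat val kind (t (ρ i).1) α i)) →
      VLDL.sat val kind φ α l

/-- The size of a VLDL formula: the number of subformulas (including the tests of all
guard automata) plus the total number of states of all guard automata. -/
def VLDL.size {V A : Type} : VLDL V A → ℕ
  | .atom _ => 1
  | .neg φ => φ.size + 1
  | .and φ ψ => φ.size + ψ.size + 1
  | .or φ ψ => φ.size + ψ.size + 1
  | .dia n _ _ t φ => φ.size + n + 1 + (List.ofFn (fun q => (t q).size)).sum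
  | .box n _ _ t φ => φ.size + n + 1 + (List.ofFn (fun q => (t q).size)).sum

/-- The letter of `2^P` (for `P = Fin p`) encoded by the bitmask `i`. -/
def letterOf (p : ℕ) (i : ℕ) : Fin p → Bool := fun j => Nat.testBit i j.val

def symCode : SymKind → ℕ
  | .call => 0
  | .ret => 1
  | .loc => 2

/-- A natural effective encoding of the partition of `2^P` into calls, returns and
local actions as a natural number. -/
def kindCode (p : ℕ) (kind : (Fin p → Bool) → SymKind) : ℕ :=
  Encodable.encode (List.ofFn (fun i : Fin (2 ^ p) => symCode (kind (letterOf p i.val))))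

/-- A natural effective encoding of the data of a visibly pushdown automaton over the
alphabet `2^P` (for `P = Fin p`), with states and stack symbols drawn from `ℕ`. -/
def VPAData.codeP {p n m : ℕ} (M : VPAData (Fin p → Bool) n m) : ℕ :=
  Encodable.encode
    (n, m,
      List.ofFn (fun q : Fin n => List.ofFn (fun i : Fin (2 ^ p) =>
        List.ofFn (fun q' : Fin n => List.ofFn (fun g : Fin m =>
          M.callΔ q (letterOf p i.val) q' g)))),
      List.ofFn (fun q : Fin n => List.ofFn (fun i : Fin (2 ^ p) =>
        List.ofFn (fun g : Fin m => List.ofFn (fun q' : Fin n =>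
          M.retΔ q (letterOf p i.val) (some g) q')))),
      List.ofFn (fun q : Fin n => List.ofFn (fun i : Fin (2 ^ p) =>
        List.ofFn (fun q' : Fin n => M.retΔ q (letterOf p i.val) none q'))),
      List.ofFn (fun q : Fin n => List.ofFn (fun i : Fin (2 ^ p) =>
        List.ofFn (fun q' : Fin n => M.locΔ q (letterOf p i.val) q'))),
      List.ofFn (fun q : Fin n => M.start q),
      List.ofFn (fun q : Fin n => M.final q))

/-- A natural effective encoding of VLDL formulas over `2^P` (for `P = Fin p`), with
atomic propositions, states and stack symbols drawn from `ℕ`. -/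
def VLDL.code {p : ℕ} : VLDL (Fin p) (Fin p → Bool) → ℕ
  | .atom v => Nat.pair 0 v.val
  | .neg φ => Nat.pair 1 φ.code
  | .and φ ψ => Nat.pair 2 (Nat.pair φ.code ψ.code)
  | .or φ ψ => Nat.pair 3 (Nat.pair φ.code ψ.code)
  | .dia _ _ M t φ => Nat.pair 4 (Nat.pair M.codeP
      (Nat.pair (Encodable.encode (List.ofFn (fun q => (t q).code))) φ.code))
  | .box _ _ M t φ => Nat.pair 5 (Nat.pair M.codeP
      (Nat.pair (Encodable.encode (List.ofFn (fun q => (t q).code))) φ.code))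

namespace VP

/-! ### Factors of words with unmatched letters of one kind -/

/-- The kinds of factors used in the decomposition of a word: `bal` (well matched), `rets`
(unmatched returns allowed, no unmatched calls) and `calls` (unmatched calls allowed, no
unmatched returns). -/
inductive Md : Type
  | bal | rets | calls
deriving DecidableEq

instance : Fintype Md := ⟨{.bal, .rets, .calls}, by intro x; cases x <;> decide⟩

theorem card_md : Nat.card Md = 3 := by
  rw [Nat.card_eq_fintype_card]; rfl

/-- The letters that a factor of a given mode may contain without a matching partner. -/
def Md.ok : Md → SymKind → Prop
  | _, .loc => True
  | .rets, .ret => True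
  | .calls, .call => True
  | _, _ => False

/-- `Der kd m w`: the word `w` is a factor of mode `m`. -/
inductive Der {B : Type} (kd : B → SymKind) : Md → List B → Prop
  | nil (m : Md) : Der kd m []
  | single (m : Md) (b : B) : m.ok (kd b) → Der kd m [b]
  | app (m : Md) (x y : List B) : Der kd m x → Der kd m y → Der kd m (x ++ y)
  | nest (m : Md) (c r : B) (w : List B) : kd c = .call → kd r = .ret → Der kd .bal w →
      Der kd m (c :: (w ++ [r]))

/-- `DerD kd i m w`: the word `w` has a derivation of depth at most `i` in mode `m`. -/
def DerD {B : Type} (kd : B → SymKind) : ℕ → Md → List B → Prop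
  | 0, m, w => w = [] ∨ ∃ b, m.ok (kd b) ∧ w = [b]
  | i + 1, m, w => DerD kd i m w ∨ (∃ x y, w = x ++ y ∧ DerD kd i m x ∧ DerD kd i m y) ∨
      ∃ c r z, w = c :: (z ++ [r]) ∧ kd c = .call ∧ kd r = .ret ∧ DerD kd i .bal z

section Words

variable {B : Type} {kd : B → SymKind}

theorem DerD.mono {i j : ℕ} (hij : i ≤ j) {m : Md} {w : List B} (h : DerD kd i m w) :
    DerD kd j m w := by
  induction hij with
  | refl => exact h
  | step _ ih => exact Or.inl ih

theorem DerD.der {i : ℕ} {m : Md} {w : List B} (h : DerD kd i m w) : Der kd m w := by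
  induction i generalizing m w with
  | zero =>
    rcases h with rfl | ⟨b, hb, rfl⟩
    · exact .nil m
    · exact .single m b hb
  | succ i ih =>
    rcases h with h | ⟨x, y, rfl, hx, hy⟩ | ⟨c, r, z, rfl, hc, hr, hz⟩
    · exact ih h
    · exact .app m x y (ih hx) (ih hy)
    · exact .nest m c r z hc hr (ih hz)

theorem DerD.length_le {i : ℕ} {m : Md} {w : List B} (h : DerD kd i m w) :
    w.length ≤ 3 * 2 ^ i := by
  induction i generalizing m w with
  | zero =>
    rcases h with rfl | ⟨b, hb, rfl⟩ <;> simp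
  | succ i ih =>
    have hp : 1 ≤ 2 ^ i := Nat.one_le_two_pow
    rcases h with h | ⟨x, y, rfl, hx, hy⟩ | ⟨c, r, z, rfl, hc, hr, hz⟩
    · have := ih h
      rw [pow_succ]; omega
    · have := ih hx
      have := ih hy
      rw [pow_succ, List.length_append]; omega
    · have := ih hz
      simp only [List.length_cons, List.length_append, List.length_nil]
      rw [pow_succ]; omega

theorem Der.derD {m : Md} {w : List B} (h : Der kd m w) : ∃ i, DerD kd i m w := by
  induction h with
  | nil m => exact ⟨0, Or.inl rfl⟩
  | single m b hb => exact ⟨0, Or.inr ⟨b, hb, rfl⟩⟩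
  | app m x y _ _ ihx ihy =>
    obtain ⟨i, hi⟩ := ihx
    obtain ⟨j, hj⟩ := ihy
    exact ⟨max i j + 1, Or.inr (Or.inl ⟨x, y, rfl, hi.mono (le_max_left _ _),
      hj.mono (le_max_right _ _)⟩)⟩
  | nest m c r w hc hr _ ih =>
    obtain ⟨i, hi⟩ := ih
    exact ⟨i + 1, Or.inr (Or.inr ⟨c, r, w, rfl, hc, hr, hi⟩)⟩

theorem Der.of_bal {m : Md} {w : List B} (h : Der kd .bal w) : Der kd m w := by
  generalize hb : Md.bal = b at h
  induction h with
  | nil => exact .nil m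
  | single m' b hk =>
    subst hb
    refine .single m b ?_
    cases hkb : kd b <;> rw [hkb] at hk <;> first | exact hk.elim | (cases m <;> trivial)
  | app m' x y _ _ ihx ihy => exact .app m x y (ihx hb) (ihy hb)
  | nest m' c r w hc hr hw _ => exact .nest m c r w hc hr hw

/-- Every word is an unmatched-returns factor followed by an unmatched-calls factor. -/
theorem exists_split (w : List B) : ∃ x y, w = x ++ y ∧ Der kd .rets x ∧ Der kd .calls y := by
  -- Either `y` is well matched or it has a last unmatched call.
  have key : ∀ {m : Md} {y : List B}, Der kd m y → m = .calls →
      Der kd .bal y ∨ ∃ y1 c y2, y = y1 ++ c :: y2 ∧ Der kd .calls y1 ∧ kd c = .call ∧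
        Der kd .bal y2 := by
    intro m y h hm
    induction h with
    | nil => exact Or.inl (.nil _)
    | single m b hk =>
      subst hm
      cases hkb : kd b
      · exact Or.inr ⟨[], b, [], rfl, .nil _, hkb, .nil _⟩
      · rw [hkb] at hk; exact hk.elim
      · exact Or.inl (.single _ b (by rw [hkb]; trivial))
    | app m x y hx hy ihx ihy =>
      subst hm
      rcases ihy rfl with hb | ⟨y1, c, y2, rfl, h1, hc, h2⟩
      · rcases ihx rfl with hbx | ⟨y1, c, y2, rfl, h1, hc, h2⟩
        · exact Or.inl (.app _ _ _ hbx hb)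
        · exact Or.inr ⟨y1, c, y2 ++ y, by simp, h1, hc, .app _ _ _ h2 hb⟩
      · exact Or.inr ⟨x ++ y1, c, y2, by simp, .app _ _ _ hx h1, hc, h2⟩
    | nest m c r w hc hr hw _ => exact Or.inl (.nest _ c r w hc hr hw)
  induction w using List.reverseRecOn with
  | nil => exact ⟨[], [], rfl, .nil _, .nil _⟩
  | append_singleton w b ih =>
    obtain ⟨x, y, rfl, hx, hy⟩ := ih
    cases hb : kd b
    · exact ⟨x, y ++ [b], by simp, hx, .app _ _ _ hy (.single _ b (by rw [hb]; trivial))⟩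
    · rcases key hy rfl with hbal | ⟨y1, c, y2, rfl, h1, hc, h2⟩
      · exact ⟨x ++ y ++ [b], [], by simp, .app _ _ _ (.app _ _ _ hx hbal.of_bal)
          (.single _ b (by rw [hb]; trivial)), .nil _⟩
      · exact ⟨x, y1 ++ c :: (y2 ++ [b]), by simp, hx, .app _ _ _ h1 (.nest _ c b y2 hc hb h2)⟩
    · exact ⟨x, y ++ [b], by simp, hx, .app _ _ _ hy (.single _ b (by rw [hb]; trivial))⟩

/-- Short representatives: if `ty` is a finite-valued invariant of words that is compatible with
concatenation inside a mode and with nesting, then every word has a short word of the same mode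
and invariant. The set of (mode, value) pairs reachable by derivations of depth `i` grows with `i`
and is constant from the first repetition on, so depth `3 * card T` reaches everything. -/
theorem small_rep {T : Type} [Finite T] (ty : List B → T)
    (happ : ∀ m x y x' y', Der kd m x → Der kd m x' → Der kd m y → Der kd m y' →
      ty x = ty x' → ty y = ty y' → ty (x ++ y) = ty (x' ++ y'))
    (hnest : ∀ c r w w', kd c = .call → kd r = .ret → Der kd .bal w → Der kd .bal w' →
      ty w = ty w' → ty (c :: (w ++ [r])) = ty (c :: (w' ++ [r])))
    {m : Md} {w : List B} (h : Der kd m w) :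
    ∃ w', Der kd m w' ∧ ty w' = ty w ∧ w'.length ≤ 3 * 2 ^ (3 * Nat.card T) := by
  let S : ℕ → Set (Md × T) := fun i => {p | ∃ w, DerD kd i p.1 w ∧ ty w = p.2}
  have hmono : ∀ i, S i ⊆ S (i + 1) := fun i p ⟨w, hw, ht⟩ => ⟨w, Or.inl hw, ht⟩
  have hmono' : Monotone S := monotone_nat_of_le_succ hmono
  have hstab : ∀ i, S i = S (i + 1) → S (i + 1) = S (i + 2) := by
    intro i hi
    refine Set.Subset.antisymm (hmono _) ?_
    rintro ⟨m, t⟩ ⟨w, hw, rfl⟩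
    rcases hw with hw | ⟨x, y, rfl, hx, hy⟩ | ⟨c, r, z, rfl, hc, hr, hz⟩
    · exact ⟨w, hw, rfl⟩
    · have h1 : (m, ty x) ∈ S i := by rw [hi]; exact ⟨x, hx, rfl⟩
      have h2 : (m, ty y) ∈ S i := by rw [hi]; exact ⟨y, hy, rfl⟩
      obtain ⟨x', hx', htx⟩ := h1
      obtain ⟨y', hy', hty⟩ := h2
      exact ⟨x' ++ y', Or.inr (Or.inl ⟨x', y', rfl, hx', hy'⟩),
        happ m _ _ _ _ hx'.der hx.der hy'.der hy.der htx hty⟩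
    · have h1 : (Md.bal, ty z) ∈ S i := by rw [hi]; exact ⟨z, hz, rfl⟩
      obtain ⟨z', hz', htz⟩ := h1
      exact ⟨c :: (z' ++ [r]), Or.inr (Or.inr ⟨c, r, z', rfl, hc, hr, hz'⟩),
        hnest c r _ _ hc hr hz'.der hz.der htz⟩
  have hfin : ∀ i, (S i).Finite := fun i => Set.toFinite _
  have hcard : ∀ i, (S i).ncard ≤ 3 * Nat.card T := by
    intro i
    have := Set.ncard_le_card (S i)
    rwa [Nat.card_prod, card_md] at this
  have hall : ∀ j, 3 * Nat.card T ≤ j → S j = S (3 * Nat.card T) := by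
    intro j hj
    have h1 := Nat.stabilises_of_monotone (f := fun i => (S i).ncard) (b := 3 * Nat.card T)
      (n := j) (fun a b hab => Set.ncard_le_ncard (hmono' hab) (hfin b)) hcard (by
        intro i hi
        have : S i = S (i + 1) := Set.eq_of_subset_of_ncard_le (hmono i) hi.ge (hfin _)
        exact congrArg Set.ncard (hstab i this)) hj
    exact (Set.eq_of_subset_of_ncard_le (hmono' hj) h1.le (hfin _)).symm
  obtain ⟨i, hi⟩ := h.derD
  have h1 : (m, ty w) ∈ S (max i (3 * Nat.card T)) := ⟨w, hi.mono (le_max_left _ _), rfl⟩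
  rw [hall _ (le_max_right _ _)] at h1
  obtain ⟨w', hw', ht⟩ := h1
  exact ⟨w', hw'.der, ht, hw'.length_le⟩

end Words

/-! ### Runs of pushdown systems on finite words -/

/-- A visibly pushdown system given by relations, over an arbitrary letter type. -/
structure Sys (B Q Γ : Type) where
  call : Q → B → Q → Γ → Prop
  ret : Q → B → Option Γ → Q → Prop
  loc : Q → B → Q → Prop

section Runs

variable {B Q Γ : Type} (kd : B → SymKind) (S : Sys B Q Γ)

/-- One step of a pushdown system on configurations. -/
def Sys.step (c : Q × List Γ) (b : B) (c' : Q × List Γ) : Prop :=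
  match kd b with
  | .call => ∃ g, S.call c.1 b c'.1 g ∧ c'.2 = g :: c.2
  | .ret => (∃ g s, c.2 = g :: s ∧ S.ret c.1 b (some g) c'.1 ∧ c'.2 = s) ∨
      (c.2 = [] ∧ S.ret c.1 b none c'.1 ∧ c'.2 = [])
  | .loc => S.loc c.1 b c'.1 ∧ c'.2 = c.2

/-- Runs of a pushdown system on a finite word. -/
def Sys.Run : Q × List Γ → List B → Q × List Γ → Prop
  | c, [], c' => c = c'
  | c, b :: w, c' => ∃ c1, S.step kd c b c1 ∧ Sys.Run c1 w c'

/-- The state transformation of a word, read from the empty stack. -/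
def Sys.R (w : List B) (q q' : Q) : Prop := ∃ s, S.Run kd (q, []) w (q', s)

/-- No unmatched returns: runs never look below the stack they start with. -/
def Sys.NR (w : List B) : Prop := ∀ q σ q' s', S.Run kd (q, σ) w (q', s') ↔
  ∃ s, s' = s ++ σ ∧ S.Run kd (q, []) w (q', s)

/-- No unmatched calls: runs that start inside the word with the empty stack end with it. -/
def Sys.NC (w : List B) : Prop := ∀ x y, w = x ++ y → ∀ q q' s,
  S.Run kd (q, []) y (q', s) → s = []

variable {kd S}

theorem run_append {x y : List B} {c c' : Q × List Γ} :
    S.Run kd c (x ++ y) c' ↔ ∃ c1, S.Run kd c x c1 ∧ S.Run kd c1 y c' := by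
  induction x generalizing c with
  | nil => simp [Sys.Run]
  | cons b x ih =>
    simp only [List.cons_append, Sys.Run, ih]
    constructor
    · rintro ⟨c1, h1, c2, h2, h3⟩; exact ⟨c2, ⟨c1, h1, h2⟩, h3⟩
    · rintro ⟨c2, ⟨c1, h1, h2⟩, h3⟩; exact ⟨c1, h1, c2, h2, h3⟩

theorem run_single {b : B} {c c' : Q × List Γ} : S.Run kd c [b] c' ↔ S.step kd c b c' := by
  simp [Sys.Run]

theorem run_nest {c r : B} {w : List B} (hc : kd c = .call) (hr : kd r = .ret)
    (h1 : S.NR kd w) (h2 : S.NC kd w) {q q' : Q} {σ s' : List Γ} :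
    S.Run kd (q, σ) (c :: (w ++ [r])) (q', s') ↔
      s' = σ ∧ ∃ q1 g q2, S.call q c q1 g ∧ S.R kd w q1 q2 ∧ S.ret q2 r (some g) q' := by
  change (∃ c1, S.step kd (q, σ) c c1 ∧ S.Run kd c1 (w ++ [r]) (q', s')) ↔ _
  simp only [run_append, run_single]
  constructor
  · rintro ⟨⟨q1, s1⟩, hs, ⟨q2, s2⟩, hw, hs'⟩
    simp only [Sys.step, hc] at hs
    obtain ⟨g, hg, rfl⟩ := hs
    obtain ⟨s, rfl, hw'⟩ := (h1 _ _ _ _).1 hw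
    obtain rfl := h2 [] w rfl _ _ _ hw'
    simp only [Sys.step, hr] at hs'
    rcases hs' with ⟨g', s, he, hret, rfl⟩ | ⟨he, _⟩
    · simp only [List.nil_append, List.cons.injEq] at he
      obtain ⟨rfl, rfl⟩ := he
      exact ⟨rfl, q1, g, q2, hg, ⟨_, hw'⟩, hret⟩
    · simp at he
  · rintro ⟨rfl, q1, g, q2, hg, ⟨s, hw⟩, hret⟩
    obtain rfl := h2 [] w rfl _ _ _ hw
    refine ⟨(q1, g :: s'), ?_, (q2, g :: s'), ?_, ?_⟩
    · simp only [Sys.step, hc]; exact ⟨g, hg, rfl⟩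
    · exact (h1 _ _ _ _).2 ⟨[], rfl, hw⟩
    · simp only [Sys.step, hr]; exact Or.inl ⟨g, s', rfl, hret, rfl⟩

theorem Sys.NR.append {x y : List B} (hx : S.NR kd x) (hy : S.NR kd y) : S.NR kd (x ++ y) := by
  intro q σ q' s'
  simp only [run_append]
  constructor
  · rintro ⟨⟨q1, s1⟩, h1, h2⟩
    obtain ⟨s, rfl, h1'⟩ := (hx _ _ _ _).1 h1
    obtain ⟨t, rfl, h2'⟩ := (hy _ _ _ _).1 h2
    exact ⟨t ++ s, by simp, (q1, s), h1', (hy _ _ _ _).2 ⟨t, rfl, h2'⟩⟩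
  · rintro ⟨s, rfl, ⟨q1, s1⟩, h1, h2⟩
    obtain ⟨t, rfl, h2'⟩ := (hy _ _ _ _).1 h2
    exact ⟨(q1, s1 ++ σ), (hx _ _ _ _).2 ⟨s1, rfl, h1⟩, (hy _ _ _ _).2 ⟨t, by simp, h2'⟩⟩

theorem Sys.NC.append {x y : List B} (hx : S.NC kd x) (hy : S.NC kd y) : S.NC kd (x ++ y) := by
  intro u v he q q' s hrun
  rcases List.append_eq_append_iff.1 he with ⟨a, rfl, rfl⟩ | ⟨a, rfl, rfl⟩
  · exact hy _ _ rfl _ _ _ hrun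
  · obtain ⟨⟨q1, s1⟩, h1, h2⟩ := run_append.1 hrun
    obtain rfl := hx _ _ rfl _ _ _ h1
    exact hy [] _ rfl _ _ _ h2

/-- Factors without unmatched returns satisfy `NR`, and those without unmatched calls satisfy
`NC`. -/
theorem nr_nc_of_der {m : Md} {w : List B} (h : Der kd m w) :
    (m ≠ .rets → S.NR kd w) ∧ (m ≠ .calls → S.NC kd w) := by
  have hnc_nil : S.NC kd [] := by
    intro x y he q q' s hrun
    obtain ⟨rfl, rfl⟩ := List.append_eq_nil_iff.1 he.symm
    simp only [Sys.Run, Prod.mk.injEq] at hrun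
    exact hrun.2.symm
  have hnc_ret : ∀ b, kd b ≠ .call → S.NC kd [b] := by
    intro b hb x y he q q' s hrun
    rcases List.append_eq_singleton_iff.1 he.symm with ⟨rfl, rfl⟩ | ⟨rfl, rfl⟩
    · rw [run_single] at hrun
      simp only [Sys.step] at hrun
      cases hk : kd b
      · exact absurd hk hb
      · simp only [hk] at hrun
        rcases hrun with ⟨g, s1, h, _⟩ | ⟨_, _, h⟩
        · simp at h
        · exact h
      · simp only [hk] at hrun
        exact hrun.2
    · simp only [Sys.Run, Prod.mk.injEq] at hrun
      exact hrun.2.symm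
  induction h with
  | nil m =>
    refine ⟨fun _ q σ q' s' => ?_, fun _ => hnc_nil⟩
    simp only [Sys.Run, Prod.mk.injEq]
    constructor
    · rintro ⟨rfl, rfl⟩; exact ⟨[], rfl, rfl, rfl⟩
    · rintro ⟨s, rfl, rfl, rfl⟩; exact ⟨rfl, rfl⟩
  | single m b hk =>
    constructor
    · intro hm q σ q' s'
      simp only [run_single, Sys.step]
      cases hb : kd b
      · constructor
        · rintro ⟨g, h, rfl⟩; exact ⟨[g], rfl, g, h, rfl⟩
        · rintro ⟨s, rfl, g, h, rfl⟩; exact ⟨g, h, rfl⟩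
      · rw [hb] at hk; cases m <;> first | exact hk.elim | exact absurd rfl hm
      · constructor
        · rintro ⟨h, rfl⟩; exact ⟨[], rfl, h, rfl⟩
        · rintro ⟨s, rfl, h, rfl⟩; exact ⟨h, rfl⟩
    · intro hm
      refine hnc_ret b fun hb => ?_
      rw [hb] at hk; cases m <;> first | exact hk.elim | exact absurd rfl hm
  | app m x y _ _ ihx ihy =>
    exact ⟨fun hm => (ihx.1 hm).append (ihy.1 hm), fun hm => (ihx.2 hm).append (ihy.2 hm)⟩
  | nest m c r w hc hr _ ih =>
    have h1 := ih.1 (by decide)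
    have h2 := ih.2 (by decide)
    constructor
    · intro _ q σ q' s'
      simp only [run_nest hc hr h1 h2]
      constructor
      · rintro ⟨rfl, h⟩; exact ⟨[], rfl, rfl, h⟩
      · rintro ⟨s, rfl, rfl, h⟩; exact ⟨rfl, h⟩
    · intro _ x y he q q' s hrun
      rcases x with _ | ⟨a, x⟩
      · rw [List.nil_append] at he
        rw [← he, run_nest hc hr h1 h2] at hrun
        exact hrun.1
      · rw [List.cons_append, List.cons.injEq] at he
        exact (h2.append (hnc_ret r (by rw [hr]; decide))) _ _ he.2 _ _ _ hrun

/-- Two consecutive factors are compatible if no call of the first is matched in the second. -/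
def Sys.Compat (kd : B → SymKind) (S : Sys B Q Γ) (x y : List B) : Prop :=
  S.NC kd x ∨ S.NR kd y

/-- Two factors of the same mode are compatible: either the first has no unmatched calls or the
second has no unmatched returns. -/
theorem compat_of_der {m : Md} {x y : List B} (hx : Der kd m x) (hy : Der kd m y) :
    S.Compat kd x y := by
  by_cases hm : m = .rets
  · exact Or.inl ((nr_nc_of_der hx).2 (by rw [hm]; decide))
  · exact Or.inr ((nr_nc_of_der hy).1 hm)

theorem Sys.Compat.suffix {x y z : List B} (h : S.Compat kd (x ++ y) z) : S.Compat kd y z := by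
  refine h.imp_left fun h u v he q q' s hrun => ?_
  exact h (x ++ u) v (by rw [he, List.append_assoc]) _ _ _ hrun

/-- The state transformation of a concatenation of compatible factors is a composition, since no
information passes through the stack. -/
theorem R_append {x y : List B} (h : S.Compat kd x y) {q q' : Q} :
    S.R kd (x ++ y) q q' ↔ ∃ q1, S.R kd x q q1 ∧ S.R kd y q1 q' := by
  simp only [Sys.R, run_append]
  rcases h with h | h
  · constructor
    · rintro ⟨s, ⟨q1, s1⟩, h1, h2⟩
      obtain rfl := h [] x rfl _ _ _ h1
      exact ⟨q1, ⟨_, h1⟩, ⟨_, h2⟩⟩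
    · rintro ⟨q1, ⟨s1, h1⟩, ⟨s, h2⟩⟩
      obtain rfl := h [] x rfl _ _ _ h1
      exact ⟨s, (q1, []), h1, h2⟩
  · constructor
    · rintro ⟨s, ⟨q1, s1⟩, h1, h2⟩
      obtain ⟨t, rfl, h2'⟩ := (h _ _ _ _).1 h2
      exact ⟨q1, ⟨_, h1⟩, ⟨_, h2'⟩⟩
    · rintro ⟨q1, ⟨s1, h1⟩, ⟨s, h2⟩⟩
      exact ⟨s ++ s1, (q1, s1), h1, (h _ _ _ _).2 ⟨s, rfl, h2⟩⟩

theorem R_nest {c r : B} {w : List B} (hc : kd c = .call) (hr : kd r = .ret)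
    (hw : Der kd .bal w) {q q' : Q} :
    S.R kd (c :: (w ++ [r])) q q' ↔
      ∃ q1 g q2, S.call q c q1 g ∧ S.R kd w q1 q2 ∧ S.ret q2 r (some g) q' := by
  have h := nr_nc_of_der (S := S) hw
  simp only [Sys.R, run_nest hc hr (h.1 (by decide)) (h.2 (by decide)), exists_eq_left]

end Runs

end VP

namespace VP

/-! ### The finite invariant of a word -/

section Types

variable {B Q Γ : Type} (kd : B → SymKind) (S : Sys B Q Γ) (I : Q → Prop) (lab : B → Prop)

/-- The states reachable from the set `E` (with empty stack) by reading `w`. -/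
def Sys.img (E : Q → Prop) (w : List B) : Q → Prop := fun q' => ∃ q, E q ∧ S.R kd w q q'

/-- The open claims of a word: for each of its positions, the truth value `v` claimed by the
letter there, together with the set `E` of states that runs started at this position in the set
`I` (with empty stack) can have at the end of the word. -/
def Sys.X (w : List B) (v : Prop) (E : Q → Prop) : Prop :=
  ∃ x b y, w = x ++ b :: y ∧ v = lab b ∧ E = S.img kd I (b :: y)

/-- The invariant of a word: its state transformation and its open claims. -/
def Sys.ty (w : List B) : (Q → Q → Prop) × (Prop → (Q → Prop) → Prop) :=
  (S.R kd w, S.X kd I lab w)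

variable {kd S I lab}

theorem img_append {x y : List B} (h : S.Compat kd x y) (E : Q → Prop) :
    S.img kd E (x ++ y) = S.img kd (S.img kd E x) y := by
  funext q'
  simp only [Sys.img, R_append h, eq_iff_iff]
  constructor
  · rintro ⟨q, hq, q1, h1, h2⟩; exact ⟨q1, ⟨q, hq, h1⟩, h2⟩
  · rintro ⟨q1, ⟨q, hq, h1⟩, h2⟩; exact ⟨q, hq, q1, h1, h2⟩

theorem X_cons {b : B} {z : List B} {v : Prop} {E : Q → Prop} :
    S.X kd I lab (b :: z) v E ↔
      (v = lab b ∧ E = S.img kd I (b :: z)) ∨ S.X kd I lab z v E := by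
  constructor
  · rintro ⟨x, b', y, he, hv, hE⟩
    rcases x with _ | ⟨a, x⟩
    · rw [List.nil_append, List.cons.injEq] at he
      obtain ⟨rfl, rfl⟩ := he
      exact Or.inl ⟨hv, hE⟩
    · rw [List.cons_append, List.cons.injEq] at he
      exact Or.inr ⟨x, b', y, he.2, hv, hE⟩
  · rintro (⟨hv, hE⟩ | ⟨x, b', y, he, hv, hE⟩)
    · exact ⟨[], b, z, rfl, hv, hE⟩
    · exact ⟨b :: x, b', y, by rw [he]; rfl, hv, hE⟩

theorem X_append {x y : List B} (h : S.Compat kd x y) {v : Prop} {E : Q → Prop} :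
    S.X kd I lab (x ++ y) v E ↔
      S.X kd I lab y v E ∨ ∃ E', S.X kd I lab x v E' ∧ E = S.img kd E' y := by
  constructor
  · rintro ⟨x1, b, y1, he, hv, hE⟩
    rcases List.append_eq_append_iff.1 he with ⟨a, rfl, rfl⟩ | ⟨a, rfl, h2⟩
    · exact Or.inl ⟨a, b, y1, rfl, hv, hE⟩
    · rcases a with _ | ⟨a0, a⟩
      · exact Or.inl ⟨[], b, y1, h2.symm, hv, hE⟩
      · rw [List.cons_append, List.cons.injEq] at h2
        obtain ⟨rfl, rfl⟩ := h2
        refine Or.inr ⟨_, ⟨x1, b, a, rfl, hv, rfl⟩, ?_⟩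
        rw [hE, ← img_append h.suffix]; rfl
  · rintro (⟨x1, b, y1, rfl, hv, hE⟩ | ⟨E', ⟨x1, b, y1, rfl, hv, rfl⟩, rfl⟩)
    · exact ⟨x ++ x1, b, y1, by simp, hv, hE⟩
    · refine ⟨x1, b, y1 ++ y, by simp, hv, ?_⟩
      rw [← img_append h.suffix]; rfl

theorem img_congr {y y' : List B} (h : S.R kd y = S.R kd y') (E : Q → Prop) :
    S.img kd E y = S.img kd E y' := by
  funext q; simp only [Sys.img, h]

/-- The invariant of a concatenation of compatible factors is determined by their invariants. -/
theorem ty_append {x y x' y' : List B} (h : S.Compat kd x y) (h' : S.Compat kd x' y')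
    (hx : S.ty kd I lab x = S.ty kd I lab x') (hy : S.ty kd I lab y = S.ty kd I lab y') :
    S.ty kd I lab (x ++ y) = S.ty kd I lab (x' ++ y') := by
  simp only [Sys.ty, Prod.mk.injEq] at hx hy ⊢
  constructor
  · funext q q'
    rw [eq_iff_iff, R_append h, R_append h', hx.1, hy.1]
  · funext v E
    rw [eq_iff_iff, X_append h, X_append h', hx.2, hy.2]
    simp only [img_congr hy.1]

/-- The invariant of a well-matched word enclosed in a call and its return is determined by the
invariant of the word. -/
theorem ty_nest {c r : B} {w w' : List B} (hc : kd c = .call) (hr : kd r = .ret)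
    (hw : Der kd .bal w) (hw' : Der kd .bal w')
    (h : S.ty kd I lab w = S.ty kd I lab w') :
    S.ty kd I lab (c :: (w ++ [r])) = S.ty kd I lab (c :: (w' ++ [r])) := by
  have hR : S.R kd (c :: (w ++ [r])) = S.R kd (c :: (w' ++ [r])) := by
    funext q q'
    simp only [Sys.ty, Prod.mk.injEq] at h
    rw [eq_iff_iff, R_nest hc hr hw, R_nest hc hr hw', h.1]
  have hX := ty_append (S := S) (I := I) (lab := lab) (x := w) (x' := w') (y := [r]) (y' := [r])
    (Or.inl ((nr_nc_of_der hw).2 (by decide))) (Or.inl ((nr_nc_of_der hw').2 (by decide))) h rfl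
  simp only [Sys.ty, Prod.mk.injEq] at hX ⊢
  refine ⟨hR, ?_⟩
  funext v E
  rw [eq_iff_iff, X_cons, X_cons, hX.2, img_congr hR]

/-- A state that every letter can keep, whatever is on the stack. -/
def Sys.Absorbing (kd : B → SymKind) (S : Sys B Q Γ) (top : Q) : Prop :=
  ∀ b, (kd b = .call → ∃ g, S.call top b top g) ∧ (∀ og, kd b = .ret → S.ret top b og top) ∧
    (kd b = .loc → S.loc top b top)

theorem Sys.Absorbing.run {top : Q} (h : S.Absorbing kd top) (s : List Γ) (y : List B) :
    ∃ s', S.Run kd (top, s) y (top, s') := by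
  induction y generalizing s with
  | nil => exact ⟨s, rfl⟩
  | cons b y ih =>
    have : ∃ s1, S.step kd (top, s) b (top, s1) := by
      simp only [Sys.step]
      cases hb : kd b
      · obtain ⟨g, hg⟩ := (h b).1 hb
        exact ⟨_, g, hg, rfl⟩
      · cases s with
        | nil => exact ⟨[], Or.inr ⟨rfl, (h b).2.1 _ hb, rfl⟩⟩
        | cons g s => exact ⟨s, Or.inl ⟨g, s, rfl, (h b).2.1 _ hb, rfl⟩⟩
      · exact ⟨s, (h b).2.2 hb, rfl⟩
    obtain ⟨s1, h1⟩ := this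
    obtain ⟨s2, h2⟩ := ih s1
    exact ⟨s2, (top, s1), h1, h2⟩

theorem Sys.Absorbing.img {top : Q} (h : S.Absorbing kd top) {E : Q → Prop} {x : List B}
    (y : List B) (hx : S.img kd E x top) : S.img kd E (x ++ y) top := by
  obtain ⟨q, hq, s, hrun⟩ := hx
  obtain ⟨s', h'⟩ := h.run s y
  exact ⟨q, hq, s', run_append.2 ⟨_, hrun, h'⟩⟩

end Types

/-! ### Factors of infinite words -/

section Factors

variable {B : Type} {kd : B → SymKind}

/-- The factor `β i, …, β (j-1)` of an infinite word. -/
def fac (β : ℕ → B) (i j : ℕ) : List B := (List.range' i (j - i)).map β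

theorem fac_self (β : ℕ → B) (i : ℕ) : fac β i i = [] := by simp [fac]

theorem fac_append (β : ℕ → B) {i j k : ℕ} (h1 : i ≤ j) (h2 : j ≤ k) :
    fac β i j ++ fac β j k = fac β i k := by
  obtain ⟨a, rfl⟩ := Nat.exists_eq_add_of_le h1
  obtain ⟨b, rfl⟩ := Nat.exists_eq_add_of_le h2
  have : i + a + b - i = a + b := by omega
  simp only [fac, this, Nat.add_sub_cancel_left, ← List.map_append]
  rw [List.range'_append_1]

theorem fac_succ (β : ℕ → B) (i : ℕ) : fac β i (i + 1) = [β i] := by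
  simp [fac]

theorem fac_cons (β : ℕ → B) {i j : ℕ} (h : i < j) : fac β i j = β i :: fac β (i + 1) j := by
  rw [← fac_append β (Nat.le_succ i) h, fac_succ]; rfl

theorem length_fac (β : ℕ → B) (i j : ℕ) : (fac β i j).length = j - i := by simp [fac]

theorem mem_fac {β : ℕ → B} {i j : ℕ} {b : B} : b ∈ fac β i j ↔ ∃ k, i ≤ k ∧ k < j ∧ β k = b := by
  simp only [fac, List.mem_map, List.mem_range'_1]
  constructor
  · rintro ⟨k, ⟨h1, h2⟩, rfl⟩; exact ⟨k, h1, by omega, rfl⟩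
  · rintro ⟨k, h1, h2, rfl⟩; exact ⟨k, ⟨h1, by omega⟩, rfl⟩

/-- The splittings of a factor at one of its letters. -/
theorem fac_eq_append_cons {β : ℕ → B} {i n : ℕ} {x y : List B} {b : B} :
    fac β i n = x ++ b :: y ↔
      ∃ k, i ≤ k ∧ k < n ∧ x = fac β i k ∧ b = β k ∧ b :: y = fac β k n := by
  constructor
  · intro h
    have hlen := congrArg List.length h
    rw [length_fac, List.length_append, List.length_cons] at hlen
    have h1 : i ≤ i + x.length := by omega
    have h2 : i + x.length < n := by omega
    rw [← fac_append β h1 h2.le] at h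
    obtain ⟨h3, h4⟩ := List.append_inj h (by rw [length_fac]; omega)
    refine ⟨i + x.length, h1, h2, h3.symm, ?_, h4.symm⟩
    rw [fac_cons β h2, List.cons.injEq] at h4
    exact h4.1.symm
  · rintro ⟨k, h1, h2, rfl, rfl, h⟩
    rw [h, fac_append β h1 h2.le]

theorem X_fac {Q Γ : Type} {S : Sys B Q Γ} {I : Q → Prop} {lab : B → Prop} {β : ℕ → B}
    {i n : ℕ} {v : Prop} {E : Q → Prop} : S.X kd I lab (fac β i n) v E ↔
      ∃ k, i ≤ k ∧ k < n ∧ v = lab (β k) ∧ E = S.img kd I (fac β k n) := by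
  constructor
  · rintro ⟨x, b, y, he, hv, hE⟩
    obtain ⟨k, h1, h2, rfl, rfl, h⟩ := fac_eq_append_cons.1 he
    exact ⟨k, h1, h2, hv, by rw [hE, h]⟩
  · rintro ⟨k, h1, h2, hv, hE⟩
    refine ⟨fac β i k, β k, fac β (k + 1) n, ?_, hv, by rw [hE, fac_cons β h2]⟩
    rw [← fac_cons β h2, fac_append β h1 h2.le]

/-- Every infinite word has infinitely many cuts such that all factors between two of them have one
mode, and every prefix up to a cut is an unmatched-returns word followed by a word of that mode. -/
theorem exists_cuts (kd : B → SymKind) (β : ℕ → B) :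
    ∃ (m : Md) (d : ℕ → ℕ), m ≠ .bal ∧ StrictMono d ∧ 0 < d 0 ∧
      (∀ a, ∃ u1 u2, fac β 0 (d a) = u1 ++ u2 ∧ Der kd .rets u1 ∧ Der kd m u2) ∧
      ∀ a b, a ≤ b → Der kd m (fac β (d a) (d b)) := by
  -- `unm k`: the letter at position `k` is a call without matching return
  let unm : ℕ → Prop := fun k => kd (β k) = .call ∧
    ∀ j, k < j → Der kd .bal (fac β (k + 1) j) → kd (β j) ≠ .ret
  have hnext : ∀ k, ∃ k', k < k' ∧ (Der kd .bal (fac β k k') ∨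
      (k' = k + 1 ∧ kd (β k) = .ret) ∨ (k' = k + 1 ∧ unm k)) := by
    intro k
    cases hk : kd (β k)
    · by_cases hu : unm k
      · exact ⟨k + 1, Nat.lt_succ_self k, Or.inr (Or.inr ⟨rfl, hu⟩)⟩
      · simp only [unm, hk, true_and, not_forall, not_not] at hu
        obtain ⟨j, hj, hd, hr⟩ := hu
        refine ⟨j + 1, by omega, Or.inl ?_⟩
        rw [fac_cons β (by omega), ← fac_append β hj (Nat.le_succ j), fac_succ]
        exact .nest _ _ _ _ hk hr hd
    · exact ⟨k + 1, Nat.lt_succ_self k, Or.inr (Or.inl ⟨rfl, rfl⟩)⟩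
    · refine ⟨k + 1, Nat.lt_succ_self k, Or.inl ?_⟩
      rw [fac_succ]
      exact .single _ _ (by rw [hk]; trivial)
  choose nx hlt hnx using hnext
  let c : ℕ → ℕ := fun n => nx^[n] 0
  have hc : ∀ n, c (n + 1) = nx (c n) := fun n => Function.iterate_succ_apply' nx n 0
  have hcm : StrictMono c := strictMono_nat_of_lt_succ fun n => by rw [hc]; exact hlt _
  have hcon : ∀ (m : Md) (n0 : ℕ), (∀ n, n0 ≤ n → Der kd m (fac β (c n) (c (n + 1)))) →
      ∀ a b, n0 ≤ a → a ≤ b → Der kd m (fac β (c a) (c b)) := by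
    intro m n0 h a b ha hab
    induction hab with
    | refl => rw [fac_self]; exact .nil m
    | step hab ih =>
      rw [← fac_append β (hcm.monotone hab) (hcm.monotone (Nat.le_succ _))]
      exact .app _ _ _ ih (h _ (ha.trans hab))
  have hc0 : c 0 = 0 := rfl
  by_cases hu : ∃ n, unm (c n)
  · classical
    let n0 := Nat.find hu
    have hn0 : unm (c n0) := Nat.find_spec hu
    have hbefore : ∀ n, n < n0 → Der kd .rets (fac β (c n) (c (n + 1))) := by
      intro n hn
      rw [hc]
      rcases hnx (c n) with h | ⟨h1, h2⟩ | ⟨h1, h2⟩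
      · exact h.of_bal
      · rw [h1, fac_succ]; exact .single _ _ (by rw [h2]; trivial)
      · exact absurd h2 (Nat.find_min hu hn)
    -- After an unmatched call, every later unmatched return would match the last unmatched call.
    have hafter : ∀ k, Der kd .calls (fac β (c (n0 + k)) (c (n0 + k + 1))) ∧
        ∃ l, unm l ∧ l < c (n0 + k + 1) ∧ Der kd .bal (fac β (l + 1) (c (n0 + k + 1))) := by
      intro k
      induction k with
      | zero =>
        rcases hnx (c n0) with h | ⟨h1, h2⟩ | ⟨h1, h2⟩
        · exfalso
          -- a well-matched factor that begins with a call contains the matching return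
          have key : ∀ {m : Md} {w : List B}, Der kd m w → m = .bal → ∀ b z, w = b :: z →
              kd b = .call → ∃ z1 r z2, z = z1 ++ r :: z2 ∧ Der kd .bal z1 ∧ kd r = .ret := by
            intro m w hd hm
            induction hd with
            | nil => intro b z h; simp at h
            | single m b hk =>
              subst hm
              intro b' z h hb'
              rw [List.cons.injEq] at h
              rw [h.1, hb'] at hk
              exact hk.elim
            | app m x y _ _ ihx ihy =>
              intro b z h hb
              rcases x with _ | ⟨x0, x⟩
              · exact ihy hm b z h hb
              · rw [List.cons_append, List.cons.injEq] at h
                obtain ⟨rfl, rfl⟩ := h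
                obtain ⟨z1, r, z2, rfl, h1, h2⟩ := ihx hm _ _ rfl hb
                exact ⟨z1, r, z2 ++ y, by simp, h1, h2⟩
            | nest m c r w hc hr hw _ =>
              intro b z h hb
              rw [List.cons.injEq] at h
              exact ⟨w, r, [], h.2.symm, hw, hr⟩
          obtain ⟨z1, r, z2, hz, hz1, hr⟩ := key h rfl _ _ (fac_cons β (hlt (c n0))) hn0.1
          obtain ⟨j, hj1, hj2, rfl, rfl, _⟩ := fac_eq_append_cons.1 hz
          exact hn0.2 j hj1 hz1 hr
        · rw [hn0.1] at h2; cases h2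
        · rw [Nat.add_zero, hc, h1, fac_succ]
          refine ⟨.single _ _ (by rw [hn0.1]; trivial), c n0, hn0, Nat.lt_succ_self _, ?_⟩
          rw [fac_self]; exact .nil _
      | succ k ih =>
        obtain ⟨_, l, hl, hlt', hd⟩ := ih
        have e : n0 + (k + 1) = n0 + k + 1 := rfl
        rw [e, hc (n0 + k + 1)]
        rcases hnx (c (n0 + k + 1)) with h | ⟨h1, h2⟩ | ⟨h1, h2⟩
        · refine ⟨h.of_bal, l, hl, hlt'.trans (hlt _), ?_⟩
          rw [← fac_append β hlt' (hlt _).le]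
          exact .app _ _ _ hd h
        · exact absurd h2 (hl.2 _ hlt' hd)
        · rw [h1, fac_succ]
          refine ⟨.single _ _ (by rw [h2.1]; trivial), _, h2, Nat.lt_succ_self _, ?_⟩
          rw [fac_self]; exact .nil _
    have hafter' : ∀ n, n0 ≤ n → Der kd .calls (fac β (c n) (c (n + 1))) := by
      intro n hn
      obtain ⟨k, rfl⟩ := Nat.exists_eq_add_of_le hn
      exact (hafter k).1
    have hpre : ∀ n, n ≤ n0 → Der kd .rets (fac β 0 (c n)) := by
      intro n
      induction n with
      | zero => intro _; rw [hc0, fac_self]; exact .nil _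
      | succ n ih =>
        intro hn
        rw [← fac_append β (Nat.zero_le _) (hcm.monotone (Nat.le_succ n))]
        exact .app _ _ _ (ih (by omega)) (hbefore n hn)
    refine ⟨.calls, fun a => c (n0 + 1 + a), by decide, fun a b hab => hcm (by omega), ?_, ?_, ?_⟩
    · exact hcm (show 0 < n0 + 1 + 0 by omega)
    · intro a
      refine ⟨fac β 0 (c n0), fac β (c n0) (c (n0 + 1 + a)), ?_, hpre _ le_rfl, ?_⟩
      · rw [fac_append β (Nat.zero_le _) (hcm.monotone (by omega))]
      · exact hcon _ n0 hafter' _ _ le_rfl (by omega)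
    · intro a b hab
      exact hcon _ n0 hafter' _ _ (by omega) (by omega)
  · have hall : ∀ n, 0 ≤ n → Der kd .rets (fac β (c n) (c (n + 1))) := by
      intro n _
      rw [hc]
      rcases hnx (c n) with h | ⟨h1, h2⟩ | ⟨h1, h2⟩
      · exact h.of_bal
      · rw [h1, fac_succ]; exact .single _ _ (by rw [h2]; trivial)
      · exact absurd ⟨n, h2⟩ hu
    refine ⟨.rets, fun a => c (a + 1), by decide, fun a b hab => hcm (by omega), ?_, ?_, ?_⟩
    · exact hcm (show 0 < 0 + 1 by omega)
    · intro a
      exact ⟨[], _, rfl, .nil _, hcon _ 0 hall 0 (a + 1) le_rfl (by omega)⟩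
    · intro a b hab
      exact hcon _ 0 hall _ _ (Nat.zero_le _) (by omega)

end Factors

end VP

namespace VP

/-! ### Ultimately periodic coherent words -/

section Coherence

variable {B Q Γ : Type} (kd : B → SymKind) (S : Sys B Q Γ) (I : Q → Prop) (lab : B → Prop)
  (top : Q)

/-- A word is coherent for a system if the claim made by each of its letters is true exactly when
some run started at this position reaches the state `top`. -/
def Coh (β : ℕ → B) : Prop :=
  ∀ k, lab (β k) ↔ ∃ j, k ≤ j ∧ S.img kd I (fac β k j) top

variable {kd S I lab top}

theorem compat_lasso {m : Md} (hm : m ≠ .bal) {u1 z v : List B} (h1 : Der kd .rets u1)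
    (hz : Der kd m z) (hv : Der kd m v) : S.Compat kd (u1 ++ z) v := by
  cases m
  · exact absurd rfl hm
  · exact Or.inl ((nr_nc_of_der (Der.app _ _ _ h1 hz)).2 (by decide))
  · exact Or.inr ((nr_nc_of_der hv).1 (by decide))

/-- Sufficient conditions on `u` and `v` for the coherence of `u v v v …`: claims opened in `v`
already occur among those open after `u`, the claims open after `u` are closed under reading `v`,
the false ones have not reached `top`, and the true ones reach it while reading `v`. -/
theorem coh_lasso (htop : S.Absorbing kd top) {m : Md} (hm : m ≠ .bal) {u1 u2 v : List B}
    (h1 : Der kd .rets u1) (h2 : Der kd m u2) (hv : Der kd m v) (hne : v ≠ [])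
    (ha : ∀ p E, S.X kd I lab v p E → S.X kd I lab (u1 ++ u2) p E)
    (hb : ∀ p E, S.X kd I lab (u1 ++ u2) p E → S.X kd I lab (u1 ++ u2) p (S.img kd E v))
    (hc : ∀ p E, S.X kd I lab (u1 ++ u2) p E → ¬ p → ¬ E top)
    (hd : ∀ p E, S.X kd I lab (u1 ++ u2) p E → p → S.img kd E v top)
    {β : ℕ → B} (hu : fac β 0 (u1 ++ u2).length = u1 ++ u2)
    (hp : ∀ n, fac β ((u1 ++ u2).length + n * v.length)
      ((u1 ++ u2).length + (n + 1) * v.length) = v) :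
    Coh kd S I lab top β := by
  generalize hL : (u1 ++ u2).length = L at hu hp
  have hvl : 0 < v.length := List.length_pos_iff.2 hne
  let N : ℕ → ℕ := fun n => L + n * v.length
  have hN : ∀ n, N (n + 1) = N n + v.length := fun n => by simp only [N]; ring
  have hNm : StrictMono N := strictMono_nat_of_lt_succ fun n => by rw [hN]; omega
  have hstep : ∀ n, fac β 0 (N (n + 1)) = fac β 0 (N n) ++ v := by
    intro n
    rw [← fac_append β (Nat.zero_le _) (hNm.monotone (Nat.le_succ n))]
    exact congrArg _ (hp n)
  have hder : ∀ n, ∃ z, fac β 0 (N n) = u1 ++ z ∧ Der kd m z := by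
    intro n
    induction n with
    | zero => exact ⟨u2, by simp only [N, Nat.zero_mul, Nat.add_zero, hu], h2⟩
    | succ n ih =>
      obtain ⟨z, hz, hdz⟩ := ih
      exact ⟨z ++ v, by rw [hstep, hz, List.append_assoc], .app _ _ _ hdz hv⟩
  have hcomp : ∀ n, S.Compat kd (fac β 0 (N n)) v := by
    intro n
    obtain ⟨z, hz, hdz⟩ := hder n
    rw [hz]; exact compat_lasso hm h1 hdz hv
  have hX : ∀ n p E, S.X kd I lab (fac β 0 (N n)) p E → S.X kd I lab (u1 ++ u2) p E := by
    intro n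
    induction n with
    | zero => intro p E h; simpa only [N, Nat.zero_mul, Nat.add_zero, hu] using h
    | succ n ih =>
      intro p E h
      rw [hstep, X_append (hcomp n)] at h
      rcases h with h | ⟨E', h, rfl⟩
      · exact ha _ _ h
      · exact hb _ _ (ih _ _ h)
  intro k
  constructor
  · intro hk
    have hkN : k < N (k + 1) := (hNm.id_le k).trans_lt (hNm (Nat.lt_succ_self k))
    have hx := hX _ _ _ (X_fac.2 ⟨k, Nat.zero_le k, hkN, rfl, rfl⟩)
    refine ⟨N (k + 2), (hkN.trans (hNm (Nat.lt_succ_self _))).le, ?_⟩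
    have hco := hcomp (k + 1)
    rw [← fac_append β (Nat.zero_le k) hkN.le] at hco
    rw [← fac_append β hkN.le (hNm.monotone (Nat.le_succ (k + 1)))]
    have he : fac β (N (k + 1)) (N (k + 1).succ) = v := hp (k + 1)
    rw [he, img_append hco.suffix]
    exact hd _ _ hx hk
  · rintro ⟨j, hkj, hj⟩
    by_contra hk
    have hjN : j < N (j + 1) := (hNm.id_le j).trans_lt (hNm (Nat.lt_succ_self j))
    have hx := hX _ _ _ (X_fac.2 ⟨k, Nat.zero_le k, hkj.trans_lt hjN, rfl, rfl⟩)
    refine hc _ _ hx hk ?_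
    rw [← fac_append β hkj hjN.le]
    exact htop.img _ hj

end Coherence

/-! ### Small models -/

section SmallModel

variable {ι B : Type} {Q Γ : ι → Type}

/-- The values of the joint invariant of a family of systems with state sets `Q i`. -/
abbrev TT (Q : ι → Type) : Type :=
  ((i : ι) → (Q i → Q i → Prop) × (Prop → (Q i → Prop) → Prop)) × (Prop → Prop)

/-- The joint invariant: the invariants for all systems, and which truth values of `P` occur. -/
def tyAll (kd : B → SymKind) (S : ∀ i, Sys B (Q i) (Γ i)) (I : ∀ i, Q i → Prop)
    (lab : ι → B → Prop) (P : B → Prop) (w : List B) : TT Q :=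
  (fun i => (S i).ty kd (I i) (lab i) w, fun p => ∃ b ∈ w, p = P b)

variable {kd : B → SymKind} {S : ∀ i, Sys B (Q i) (Γ i)} {I : ∀ i, Q i → Prop}
  {lab : ι → B → Prop} {P : B → Prop}

theorem tyAll_append {x y x' y' : List B} (h : ∀ i, (S i).Compat kd x y)
    (h' : ∀ i, (S i).Compat kd x' y')
    (hx : tyAll kd S I lab P x = tyAll kd S I lab P x')
    (hy : tyAll kd S I lab P y = tyAll kd S I lab P y') :
    tyAll kd S I lab P (x ++ y) = tyAll kd S I lab P (x' ++ y') := by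
  simp only [tyAll, Prod.mk.injEq] at hx hy ⊢
  refine ⟨funext fun i => ty_append (h i) (h' i) (congrFun hx.1 i) (congrFun hy.1 i),
    funext fun p => ?_⟩
  have e1 := congrFun hx.2 p
  have e2 := congrFun hy.2 p
  simp only [eq_iff_iff, List.mem_append, or_and_right, exists_or] at e1 e2 ⊢
  rw [e1, e2]

theorem tyAll_nest {c r : B} {w w' : List B} (hc : kd c = .call) (hr : kd r = .ret)
    (hw : Der kd .bal w) (hw' : Der kd .bal w')
    (h : tyAll kd S I lab P w = tyAll kd S I lab P w') :
    tyAll kd S I lab P (c :: (w ++ [r])) = tyAll kd S I lab P (c :: (w' ++ [r])) := by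
  simp only [tyAll, Prod.mk.injEq] at h ⊢
  refine ⟨funext fun i => ty_nest hc hr hw hw' (congrFun h.1 i), funext fun p => ?_⟩
  have e1 := congrFun h.2 p
  simp only [eq_iff_iff, List.mem_append, List.mem_cons, or_and_right, exists_or] at e1 ⊢
  rw [e1]

/-- The second component of the joint invariant determines whether a letter with `P` occurs. -/
theorem exists_P_of_tyAll {w w' : List B} (h : tyAll kd S I lab P w = tyAll kd S I lab P w')
    (hw : ∃ b ∈ w, P b) : ∃ b ∈ w', P b := by
  obtain ⟨b, hb, hP⟩ := hw
  have h2 := congrFun (congrArg Prod.snd h) True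
  simp only [tyAll, eq_iff_iff] at h2
  obtain ⟨b', hb', e⟩ := h2.1 ⟨b, hb, by simpa using hP⟩
  exact ⟨b', hb', by simpa using e⟩

theorem ne_nil_of_tyAll {w w' : List B} (h : tyAll kd S I lab P w = tyAll kd S I lab P w')
    (hw : w ≠ []) : w' ≠ [] := by
  rintro rfl
  obtain ⟨b, hb⟩ := List.exists_mem_of_ne_nil w hw
  have h2 := congrFun (congrArg Prod.snd h) (P b)
  simp only [tyAll, eq_iff_iff, List.not_mem_nil, false_and, exists_false, iff_false] at h2
  exact h2 ⟨b, hb, Iff.rfl⟩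

/-- If a word coherent for finitely many systems begins with a letter satisfying `P`, then there
are words `u` and `v` of bounded length such that `u v v v …` is coherent and a letter of `u`
satisfies `P`. -/
theorem small_model [Finite ι] [∀ i, Finite (Q i)] {top : ∀ i, Q i}
    (htop : ∀ i, (S i).Absorbing kd (top i)) {β : ℕ → B}
    (hβ : ∀ i, Coh kd (S i) (I i) (lab i) (top i) β) (hP : P (β 0)) :
    ∃ u v : List B, v ≠ [] ∧
      u.length + v.length ≤ 3 * (3 * 2 ^ (3 * Nat.card (TT Q))) ∧ (∃ b ∈ u, P b) ∧
      ∀ β' : ℕ → B, fac β' 0 u.length = u →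
        (∀ n, fac β' (u.length + n * v.length) (u.length + (n + 1) * v.length) = v) →
        ∀ i, Coh kd (S i) (I i) (lab i) (top i) β' := by
  obtain ⟨m, d, hm, hd, hd0, hpre, hfac⟩ := exists_cuts kd β
  let ty := tyAll kd S I lab P
  obtain ⟨t, ht⟩ := Finite.exists_infinite_fiber (fun a => ty (fac β 0 (d a)))
  have hinf : Set.Infinite {a | ty (fac β 0 (d a)) = t} := Set.infinite_coe_iff.1 ht
  obtain ⟨a, ha⟩ := hinf.nonempty
  -- all true claims made before `d a` are witnessed before some `M`
  obtain ⟨M, hM⟩ : ∃ M, ∀ i, ∀ k ∈ Set.Iio (d a), lab i (β k) →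
      ∃ j, k ≤ j ∧ j ≤ M ∧ (S i).img kd (I i) (fac β k j) (top i) := by
    have : ∀ᶠ M in Filter.atTop, ∀ i, ∀ k ∈ Set.Iio (d a), lab i (β k) →
        ∃ j, k ≤ j ∧ j ≤ M ∧ (S i).img kd (I i) (fac β k j) (top i) := by
      rw [Filter.eventually_all]
      intro i
      rw [Filter.eventually_all_finite (Set.finite_Iio _)]
      intro k _
      by_cases hk : lab i (β k)
      · obtain ⟨j, hj, hj'⟩ := (hβ i k).1 hk
        filter_upwards [Filter.eventually_ge_atTop j] with M hM _
        exact ⟨j, hj, hM, hj'⟩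
      · exact Filter.Eventually.of_forall fun M h => absurd h hk
    exact this.exists
  obtain ⟨b, hb, hab⟩ := hinf.exists_gt (max a M)
  have hab' : a < b := (le_max_left _ _).trans_lt hab
  have hMb : M ≤ d b := ((le_max_right _ _).trans hab.le).trans (hd.id_le b)
  have hdab : d a < d b := hd hab'
  obtain ⟨u1, u2, hu, hu1, hu2⟩ := hpre a
  have hv := hfac a b hab'.le
  have happ : ∀ m x y x' y', Der kd m x → Der kd m x' → Der kd m y → Der kd m y' →
      ty x = ty x' → ty y = ty y' → ty (x ++ y) = ty (x' ++ y') :=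
    fun m x y x' y' h1 h2 h3 h4 h5 h6 =>
      tyAll_append (fun i => compat_of_der h1 h3) (fun i => compat_of_der h2 h4) h5 h6
  have hnest : ∀ c r w w', kd c = .call → kd r = .ret → Der kd .bal w → Der kd .bal w' →
      ty w = ty w' → ty (c :: (w ++ [r])) = ty (c :: (w' ++ [r])) :=
    fun c r w w' h1 h2 h3 h4 h5 => tyAll_nest h1 h2 h3 h4 h5
  obtain ⟨u1', hu1', ht1, hl1⟩ := small_rep ty happ hnest hu1
  obtain ⟨u2', hu2', ht2, hl2⟩ := small_rep ty happ hnest hu2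
  obtain ⟨v', hv', htv, hlv⟩ := small_rep ty happ hnest hv
  have hrets : ∀ {x y : List B}, Der kd .rets x → ∀ i, (S i).Compat kd x y :=
    fun h i => Or.inl ((nr_nc_of_der h).2 (by decide))
  have htu : ty (u1' ++ u2') = ty (fac β 0 (d a)) := by
    rw [hu]; exact tyAll_append (hrets hu1') (hrets hu1) ht1 ht2
  have hco : ∀ i, (S i).Compat kd (fac β 0 (d a)) (fac β (d a) (d b)) := fun i => by
    rw [hu]; exact compat_lasso hm hu1 hu2 hv
  have hty : ∀ i, (S i).X kd (I i) (lab i) (fac β 0 (d a)) =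
      (S i).X kd (I i) (lab i) (fac β 0 (d b)) := fun i => by
    have h : ty (fac β 0 (d a)) = ty (fac β 0 (d b)) := Eq.trans ha (Eq.symm hb)
    exact congrArg Prod.snd (congrFun (congrArg Prod.fst h) i)
  have htyu : ∀ i, (S i).X kd (I i) (lab i) (u1' ++ u2') =
      (S i).X kd (I i) (lab i) (fac β 0 (d a)) := fun i =>
    congrArg Prod.snd (congrFun (congrArg Prod.fst htu) i)
  have htyv : ∀ i, (S i).X kd (I i) (lab i) v' =
      (S i).X kd (I i) (lab i) (fac β (d a) (d b)) := fun i =>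
    congrArg Prod.snd (congrFun (congrArg Prod.fst htv) i)
  have hRv : ∀ i, (S i).R kd v' = (S i).R kd (fac β (d a) (d b)) := fun i =>
    congrArg Prod.fst (congrFun (congrArg Prod.fst htv) i)
  have hvne : v' ≠ [] := by
    refine ne_nil_of_tyAll htv.symm ?_
    rw [← List.length_pos_iff, length_fac]; omega
  have hsplit := fac_append β (Nat.zero_le (d a)) hdab.le
  refine ⟨u1' ++ u2', v', hvne, ?_, ?_, ?_⟩
  · rw [List.length_append]; omega
  · refine exists_P_of_tyAll htu.symm ⟨β 0, mem_fac.2 ⟨0, le_rfl, ?_, rfl⟩, hP⟩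
    exact hd0.trans_le (hd.monotone (Nat.zero_le a))
  · intro β' h1 h2 i
    refine coh_lasso (htop i) hm hu1' hu2' hv' hvne ?_ ?_ ?_ ?_ h1 h2
    · intro p E h
      rw [htyv] at h
      rw [htyu, hty, ← hsplit, X_append (hco i)]
      exact Or.inl h
    · intro p E h
      rw [htyu] at h ⊢
      rw [img_congr (hRv i), hty, ← hsplit, X_append (hco i)]
      exact Or.inr ⟨E, h, rfl⟩
    · intro p E h hp hE
      rw [htyu, X_fac] at h
      obtain ⟨k, _, hk, rfl, rfl⟩ := h
      exact hp ((hβ i k).2 ⟨_, hk.le, hE⟩)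
    · intro p E h hp
      rw [htyu, X_fac] at h
      obtain ⟨k, _, hk, rfl, rfl⟩ := h
      obtain ⟨j, hkj, hjM, hj⟩ := hM i k hk hp
      have hc := hco i
      rw [← fac_append β (Nat.zero_le k) hk.le] at hc
      rw [img_congr (hRv i), ← img_append hc.suffix, fac_append β hk.le hdab.le,
        ← fac_append β hkj (hjM.trans hMb)]
      exact (htop i).img _ hj

end SmallModel

end VP

namespace VP

/-! ### Ultimately periodic words -/

section Lasso

/-- The successor position in a word of length `K` whose last position loops back to `r`. -/
def nxt (K r i : ℕ) : ℕ := if i + 1 < K then i + 1 else r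

theorem nxt_lt {K r : ℕ} (hr : r < K) (i : ℕ) : nxt K r i < K := by
  rw [nxt]; split_ifs <;> omega

theorem nxt_iterate_lt {K r : ℕ} (hr : r < K) {k : ℕ} (hk : k < K) (i : ℕ) :
    (nxt K r)^[i] k < K := by
  cases i with
  | zero => exact hk
  | succ i => rw [Function.iterate_succ_apply']; exact nxt_lt hr _

theorem nxt_iterate {K : ℕ} (r : ℕ) {i : ℕ} (hi : i < K) : (nxt K r)^[i] 0 = i := by
  induction i with
  | zero => rfl
  | succ i ih => rw [Function.iterate_succ_apply', ih (by omega), nxt, if_pos hi]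

variable {B : Type}

/-- The infinite word read along `w` from position `k` on, looping from the end back to
position `r`. The default letter `b` is irrelevant for `r, k < w.length`. -/
def lw (w : List B) (b : B) (r k i : ℕ) : B := w.getD ((nxt w.length r)^[i] k) b

theorem nxt_iterate_loop {a c : ℕ} (n : ℕ) : ∀ {i : ℕ}, i < c →
    (nxt (a + c) a)^[a + n * c + i] 0 = a + i := by
  have hstep : ∀ n, (nxt (a + c) a)^[a + n * c] 0 = a → ∀ i, i < c →
      (nxt (a + c) a)^[a + n * c + i] 0 = a + i := by
    intro n h i
    induction i with
    | zero => intro _; exact h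
    | succ i ih =>
      intro hi
      rw [← Nat.add_assoc, Function.iterate_succ_apply', ih (by omega), nxt,
        if_pos (by omega), Nat.add_assoc]
  intro i hi
  refine hstep n ?_ i hi
  induction n with
  | zero => rw [Nat.zero_mul]; exact nxt_iterate a (by omega)
  | succ n ih =>
    have e : a + (n + 1) * c = (a + n * c + (c - 1)) + 1 := by
      rw [Nat.add_mul, Nat.one_mul]; omega
    rw [e, Function.iterate_succ_apply', hstep n ih _ (by omega), nxt, if_neg (by omega)]

variable {u v : List B}

theorem fac_lw_left (b : B) :
    fac (lw (u ++ v) b u.length 0) 0 u.length = u := by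
  refine List.ext_getElem (by rw [length_fac]; rfl) fun i h1 h2 => ?_
  have h3 : i < (u ++ v).length := by rw [List.length_append]; omega
  simp only [fac, List.getElem_map, List.getElem_range', Nat.zero_add, Nat.one_mul, lw]
  rw [nxt_iterate _ h3, List.getD_eq_getElem _ _ h3, List.getElem_append_left h2]

theorem fac_lw_right (b : B) (n : ℕ) :
    fac (lw (u ++ v) b u.length 0) (u.length + n * v.length)
      (u.length + (n + 1) * v.length) = v := by
  refine List.ext_getElem (by rw [length_fac, Nat.add_mul]; omega) fun i h1 h2 => ?_
  have h3 : u.length + i < (u ++ v).length := by rw [List.length_append]; omega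
  simp only [fac, List.getElem_map, List.getElem_range', Nat.one_mul, lw]
  rw [List.length_append, nxt_iterate_loop n h2, List.getD_eq_getElem _ _ h3,
    List.getElem_append_right (by omega)]
  simp

end Lasso

/-! ### Accepting runs of guards -/

section Guards

variable {A : Type} {n m : ℕ} (kind : A → SymKind) (M : VPAData A n m) (α : ℕ → A)
  (T : Fin n → ℕ → Prop) (G : ℕ → Prop)

/-- From the configuration `c` at position `k` there is an accepting run of `M` of length `s`
that satisfies the tests `T` and ends at a position satisfying `G`. -/
def Acc : ℕ → ℕ → Fin n × List (Fin m) → Prop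
  | 0, k, c => M.final c.1 = true ∧ T c.1 k ∧ G k
  | s + 1, k, c => T c.1 k ∧ ∃ c', M.step kind c (α k) c' ∧ Acc s (k + 1) c'

variable {kind M α T G}

theorem Acc.exists_run {s : ℕ} : ∀ {k : ℕ} {c : Fin n × List (Fin m)}, Acc kind M α T G s k c →
    ∃ ρ : ℕ → Fin n × List (Fin m), ρ k = c ∧
      (∀ i, k ≤ i → i < k + s → M.step kind (ρ i) (α i) (ρ (i + 1))) ∧
      M.final (ρ (k + s)).1 = true ∧ (∀ i, k ≤ i → i ≤ k + s → T (ρ i).1 i) ∧ G (k + s) := by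
  induction s with
  | zero =>
    rintro k c ⟨h1, h2, h3⟩
    refine ⟨fun _ => c, rfl, fun i hi hi' => by omega, h1, fun i hi hi' => ?_, h3⟩
    obtain rfl : i = k := by omega
    exact h2
  | succ s ih =>
    rintro k c ⟨h1, c', h2, h3⟩
    obtain ⟨ρ, e, hs, hf, ht, hg⟩ := ih h3
    have e1 : k + 1 + s = k + (s + 1) := by omega
    rw [e1] at hs hf ht hg
    refine ⟨fun i => if i = k then c else ρ i, by simp, ?_, ?_, ?_, hg⟩
    · intro i hi hi'
      have hi1 : i + 1 ≠ k := by omega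
      by_cases hik : i = k
      · subst hik; simp only [if_true, if_neg hi1, e]; exact h2
      · simp only [if_neg hik, if_neg hi1]; exact hs i (by omega) hi'
    · simp only [if_neg (show k + (s + 1) ≠ k by omega)]; exact hf
    · intro i hi hi'
      by_cases hik : i = k
      · subst hik; simp only [if_true]; exact h1
      · simp only [if_neg hik]; exact ht i (by omega) hi'

theorem acc_of_run {ρ : ℕ → Fin n × List (Fin m)} {l : ℕ} {s : ℕ} : ∀ {k : ℕ}, k + s = l →
    (∀ i, k ≤ i → i < l → M.step kind (ρ i) (α i) (ρ (i + 1))) →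
    M.final (ρ l).1 = true → (∀ i, k ≤ i → i ≤ l → T (ρ i).1 i) → G l →
    Acc kind M α T G s k (ρ k) := by
  induction s with
  | zero =>
    intro k hk hs hf ht hg
    obtain rfl : k = l := hk
    exact ⟨hf, ht k le_rfl le_rfl, hg⟩
  | succ s ih =>
    intro k hk hs hf ht hg
    exact ⟨ht k le_rfl (by omega), ρ (k + 1), hs k le_rfl (by omega),
      ih (by omega) (fun i hi => hs i (by omega)) hf (fun i hi => ht i (by omega)) hg⟩

theorem exists_acc_iff {k : ℕ} : (∃ s q, M.start q = true ∧ Acc kind M α T G s k (q, [])) ↔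
    ∃ l, k ≤ l ∧
      (∃ ρ : ℕ → Fin n × List (Fin m),
        M.start (ρ k).1 = true ∧ (ρ k).2 = [] ∧
        (∀ i, k ≤ i → i < l → M.step kind (ρ i) (α i) (ρ (i+1))) ∧
        M.final (ρ l).1 = true ∧
        (∀ i, k ≤ i → i ≤ l → T (ρ i).1 i)) ∧ G l := by
  constructor
  · rintro ⟨s, q, hq, h⟩
    obtain ⟨ρ, e, hs, hf, ht, hg⟩ := h.exists_run
    exact ⟨k + s, by omega, ⟨ρ, by rw [e]; exact hq, by rw [e], hs, hf, ht⟩, hg⟩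
  · rintro ⟨l, hkl, ⟨ρ, hq, he, hs, hf, ht⟩, hg⟩
    refine ⟨l - k, (ρ k).1, hq, ?_⟩
    have := acc_of_run (G := G) (show k + (l - k) = l by omega) hs hf ht hg
    rwa [show ((ρ k).1, []) = ρ k from Prod.ext rfl he.symm]

end Guards

section Sat

variable {V A : Type} {val : V → A → Prop} {kind : A → SymKind} {α : ℕ → A} {k n m : ℕ}
  {M : VPAData A n m} {t : Fin n → VLDL V A} {φ : VLDL V A}

theorem sat_dia_iff : VLDL.sat val kind (.dia n m M t φ) α k ↔ ∃ s q, M.start q = true ∧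
    Acc kind M α (fun q i => VLDL.sat val kind (t q) α i)
      (fun i => VLDL.sat val kind φ α i) s k (q, []) := by
  rw [exists_acc_iff, VLDL.sat]

theorem sat_box_iff : VLDL.sat val kind (.box n m M t φ) α k ↔ ¬ ∃ s q, M.start q = true ∧
    Acc kind M α (fun q i => VLDL.sat val kind (t q) α i)
      (fun i => ¬ VLDL.sat val kind φ α i) s k (q, []) := by
  rw [exists_acc_iff, VLDL.sat]
  simp only [not_exists, not_and, not_not]

end Sat

/-! ### Guards as systems over words of guessed labels -/

section Concrete

variable {V A : Type} (val : V → A → Prop) (kind : A → SymKind)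

/-- Letters together with guessed truth values of the temporal formulas. -/
abbrev Lab (V A : Type) : Type := A × (VLDL V A → Prop)

/-- Truth of a formula according to a labelled letter: temporal formulas are looked up. -/
def ev : VLDL V A → Lab V A → Prop
  | .atom v, b => val v b.1
  | .neg φ, b => ¬ ev φ b
  | .and φ ψ, b => ev φ b ∧ ev ψ b
  | .or φ ψ, b => ev φ b ∨ ev ψ b
  | .dia n m M t φ, b => b.2 (.dia n m M t φ)
  | .box n m M t φ, b => b.2 (.box n m M t φ)

/-- The guard `M` with tests `t` as a system over labelled letters. The additional state `none`
is entered by reading a letter satisfying `G` in a final state, and is never left; the additional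
stack symbol `none` is pushed from then on. -/
def gsys {n m : ℕ} (M : VPAData A n m) (t : Fin n → VLDL V A) (G : Lab V A → Prop) :
    Sys (Lab V A) (Option (Fin n)) (Option (Fin m)) where
  call
    | some q, b, some q', some g => ev val (t q) b ∧ M.callΔ q b.1 q' g = true
    | some q, b, none, none => M.final q = true ∧ ev val (t q) b ∧ G b
    | none, _, none, none => True
    | _, _, _, _ => False
  ret
    | some q, b, og, some q' => ev val (t q) b ∧
        ∃ og' : Option (Fin m), og = og'.map some ∧ M.retΔ q b.1 og' q' = true
    | some q, b, _, none => M.final q = true ∧ ev val (t q) b ∧ G b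
    | none, _, _, none => True
    | none, _, _, some _ => False
  loc
    | some q, b, some q' => ev val (t q) b ∧ M.locΔ q b.1 q' = true
    | some q, b, none => M.final q = true ∧ ev val (t q) b ∧ G b
    | none, _, none => True
    | none, _, some _ => False

/-- The kind of a labelled letter. -/
abbrev lkind (b : Lab V A) : SymKind := kind b.1

theorem gsys_absorbing {n m : ℕ} (M : VPAData A n m) (t : Fin n → VLDL V A)
    (G : Lab V A → Prop) : (gsys val M t G).Absorbing (lkind kind) none :=
  fun _ => ⟨fun _ => ⟨none, trivial⟩, fun _ _ => trivial, fun _ => trivial⟩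

variable {val kind}

theorem gsys_step_some {n m : ℕ} {M : VPAData A n m} {t : Fin n → VLDL V A}
    {G : Lab V A → Prop} {q q' : Fin n} {σ : List (Fin m)} {σ' : List (Option (Fin m))}
    {b : Lab V A} :
    (gsys val M t G).step (lkind kind) (some q, σ.map some) b (some q', σ') ↔
      ev val (t q) b ∧ ∃ τ, σ' = τ.map some ∧ M.step kind (q, σ) b.1 (q', τ) := by
  simp only [Sys.step, VPAData.step, vstep, lkind]
  cases kind b.1
  · simp only [gsys]
    constructor
    · rintro ⟨g, hg, rfl⟩
      cases g with
      | none => exact hg.elim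
      | some g => exact ⟨hg.1, g :: σ, rfl, g, hg.2, rfl⟩
    · rintro ⟨h1, τ, rfl, g, hg, rfl⟩
      exact ⟨some g, ⟨h1, hg⟩, rfl⟩
  · simp only [gsys]
    cases σ with
    | nil =>
      simp only [List.map_nil, reduceCtorEq, false_and, exists_false, true_and, false_or]
      constructor
      · rintro ⟨⟨h1, og, he, h2⟩, rfl⟩
        cases og with
        | none => exact ⟨h1, [], rfl, h2, rfl⟩
        | some g => simp at he
      · rintro ⟨h1, τ, rfl, h2, rfl⟩
        exact ⟨⟨h1, none, rfl, h2⟩, rfl⟩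
    | cons g0 σ =>
      simp only [List.map_cons, List.cons.injEq, reduceCtorEq, false_and, or_false]
      constructor
      · rintro ⟨g, s, ⟨rfl, rfl⟩, ⟨h1, og, he, h2⟩, rfl⟩
        cases og with
        | none => simp at he
        | some g =>
          simp only [Option.map_some, Option.some.injEq] at he
          subst he
          exact ⟨h1, σ, rfl, g0, σ, ⟨rfl, rfl⟩, h2, rfl⟩
      · rintro ⟨h1, τ, rfl, g, s, ⟨rfl, rfl⟩, h2, rfl⟩
        exact ⟨some g0, _, ⟨rfl, rfl⟩, ⟨h1, some g0, rfl, h2⟩, rfl⟩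
  · simp only [gsys]
    constructor
    · rintro ⟨⟨h1, h2⟩, rfl⟩; exact ⟨h1, σ, rfl, h2, rfl⟩
    · rintro ⟨h1, τ, rfl, h2, rfl⟩; exact ⟨⟨h1, h2⟩, rfl⟩

theorem gsys_step_none {n m : ℕ} {M : VPAData A n m} {t : Fin n → VLDL V A}
    {G : Lab V A → Prop} {q : Fin n} {σ : List (Option (Fin m))} {b : Lab V A} :
    (∃ σ', (gsys val M t G).step (lkind kind) (some q, σ) b (none, σ')) ↔
      M.final q = true ∧ ev val (t q) b ∧ G b := by
  simp only [Sys.step, lkind]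
  cases kind b.1
  · simp only [gsys]
    constructor
    · rintro ⟨σ', g, hg, rfl⟩
      cases g with
      | none => exact hg
      | some g => exact hg.elim
    · intro h; exact ⟨_, none, h, rfl⟩
  · simp only [gsys]
    constructor
    · rintro ⟨σ', ⟨g, s, _, h, _⟩ | ⟨_, h, _⟩⟩ <;> exact h
    · intro h
      cases σ with
      | nil => exact ⟨[], Or.inr ⟨rfl, h, rfl⟩⟩
      | cons g σ => exact ⟨σ, Or.inl ⟨g, σ, rfl, h, rfl⟩⟩
  · simp only [gsys]
    constructor
    · rintro ⟨σ', h, _⟩; exact h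
    · intro h; exact ⟨_, h, rfl⟩

variable {n m : ℕ} {M : VPAData A n m} {t : Fin n → VLDL V A} {G : Lab V A → Prop}
  {β : ℕ → Lab V A}

theorem gsys_run_of_acc {s : ℕ} : ∀ {k : ℕ} {q : Fin n} {σ : List (Fin m)},
    Acc kind M (fun i => (β i).1) (fun q i => ev val (t q) (β i)) (fun i => G (β i)) s k (q, σ) →
    ∃ σ', (gsys val M t G).Run (lkind kind) (some q, σ.map some) (fac β k (k + s + 1))
      (none, σ') := by
  induction s with
  | zero =>
    rintro k q σ h
    obtain ⟨σ', h'⟩ := gsys_step_none.2 h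
    rw [Nat.add_zero, fac_succ]
    exact ⟨σ', run_single.2 h'⟩
  | succ s ih =>
    rintro k q σ ⟨h1, ⟨q', τ⟩, h2, h3⟩
    obtain ⟨σ', hr⟩ := ih h3
    refine ⟨σ', ?_⟩
    rw [fac_cons β (by omega), show k + (s + 1) + 1 = k + 1 + s + 1 by omega]
    exact ⟨_, gsys_step_some.2 ⟨h1, τ, rfl, h2⟩, hr⟩

theorem acc_of_gsys_run {j : ℕ} : ∀ {k : ℕ} {q : Fin n} {σ : List (Fin m)}
    {σ' : List (Option (Fin m))},
    (gsys val M t G).Run (lkind kind) (some q, σ.map some) (fac β k (k + j)) (none, σ') →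
    ∃ s, Acc kind M (fun i => (β i).1) (fun q i => ev val (t q) (β i)) (fun i => G (β i))
      s k (q, σ) := by
  induction j with
  | zero =>
    intro k q σ σ' h
    rw [Nat.add_zero, fac_self] at h
    exact absurd (congrArg Prod.fst h) (by simp)
  | succ j ih =>
    intro k q σ σ' h
    rw [fac_cons β (by omega), show k + (j + 1) = k + 1 + j by omega] at h
    obtain ⟨⟨oq, τ⟩, h1, h2⟩ := h
    cases oq with
    | none => exact ⟨0, gsys_step_none.1 ⟨τ, h1⟩⟩
    | some q' =>
      obtain ⟨ht, τ', rfl, hs⟩ := gsys_step_some.1 h1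
      obtain ⟨s, hs'⟩ := ih h2
      exact ⟨s + 1, ht, _, hs, hs'⟩

/-- An accepting run of the guard exists iff a run of `gsys` reaches the absorbing state. -/
theorem gsys_img_iff {k : ℕ} :
    (∃ j, k ≤ j ∧ (gsys val M t G).img (lkind kind) (fun q => ∃ q0, q = some q0 ∧ M.start q0 = true)
      (fac β k j) none) ↔
    ∃ s q, M.start q = true ∧ Acc kind M (fun i => (β i).1) (fun q i => ev val (t q) (β i))
      (fun i => G (β i)) s k (q, []) := by
  constructor
  · rintro ⟨j, hkj, _, ⟨q, rfl, hq⟩, σ', h⟩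
    obtain ⟨j, rfl⟩ := Nat.exists_eq_add_of_le hkj
    obtain ⟨s, hs⟩ := acc_of_gsys_run (σ := []) h
    exact ⟨s, q, hq, hs⟩
  · rintro ⟨s, q, hq, h⟩
    obtain ⟨σ', h'⟩ := gsys_run_of_acc h
    exact ⟨k + s + 1, by omega, _, ⟨q, rfl, hq⟩, σ', h'⟩

/-! ### The family of systems of a formula -/

/-- The number of states of the outermost guard. -/
def nOf : VLDL V A → ℕ
  | .dia n _ _ _ _ => n
  | .box n _ _ _ _ => n
  | _ => 0

/-- The number of stack symbols of the outermost guard. -/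
def mOf : VLDL V A → ℕ
  | .dia _ m _ _ _ => m
  | .box _ m _ _ _ => m
  | _ => 0

/-- The system of a temporal formula. A formula `[M]φ` is treated as `¬⟨M⟩¬φ`; formulas that are
not temporal get a trivial system. -/
def sysOf (val : V → A → Prop) :
    (ψ : VLDL V A) → Sys (Lab V A) (Option (Fin (nOf ψ))) (Option (Fin (mOf ψ)))
  | .dia _ _ M t φ => gsys val M t (ev val φ)
  | .box _ _ M t φ => gsys val M t (fun b => ¬ ev val φ b)
  | .atom _ => ⟨fun _ _ _ _ => True, fun _ _ _ _ => True, fun _ _ _ => True⟩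
  | .neg _ => ⟨fun _ _ _ _ => True, fun _ _ _ _ => True, fun _ _ _ => True⟩
  | .and _ _ => ⟨fun _ _ _ _ => True, fun _ _ _ _ => True, fun _ _ _ => True⟩
  | .or _ _ => ⟨fun _ _ _ _ => True, fun _ _ _ _ => True, fun _ _ _ => True⟩

/-- The initial states of `sysOf`. -/
def startOf : (ψ : VLDL V A) → Option (Fin (nOf ψ)) → Prop
  | .dia _ _ M _ _ => fun q => ∃ q0, q = some q0 ∧ M.start q0 = true
  | .box _ _ M _ _ => fun q => ∃ q0, q = some q0 ∧ M.start q0 = true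
  | .atom _ => fun _ => True
  | .neg _ => fun _ => True
  | .and _ _ => fun _ => True
  | .or _ _ => fun _ => True

/-- The claim that a labelled letter makes about `sysOf`. -/
def labOf (ψ : VLDL V A) (b : Lab V A) : Prop :=
  match ψ with
  | .dia n m M t φ => b.2 (.dia n m M t φ)
  | .box n m M t φ => ¬ b.2 (.box n m M t φ)
  | _ => True

theorem sysOf_absorbing (ψ : VLDL V A) : (sysOf val ψ).Absorbing (lkind kind) none := by
  cases ψ
  case dia => exact gsys_absorbing _ _ _ _ _
  case box => exact gsys_absorbing _ _ _ _ _
  all_goals exact fun _ => ⟨fun _ => ⟨none, trivial⟩, fun _ _ => trivial, fun _ => trivial⟩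

/-- The word labelled with the actual truth values is coherent. -/
theorem coh_sat (α : ℕ → A) (ψ : VLDL V A) :
    Coh (lkind kind) (sysOf val ψ) (startOf ψ) (labOf ψ) none
      (fun k => (α k, fun χ => VLDL.sat val kind χ α k)) := by
  have hev : ∀ (χ : VLDL V A) k, ev val χ (α k, fun χ => VLDL.sat val kind χ α k) ↔
      VLDL.sat val kind χ α k := by
    intro χ k
    induction χ with
    | atom v => rfl
    | neg φ ih => rw [ev, VLDL.sat, ih]
    | and φ ψ ih1 ih2 => rw [ev, VLDL.sat, ih1, ih2]
    | or φ ψ ih1 ih2 => rw [ev, VLDL.sat, ih1, ih2]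
    | dia => rfl
    | box => rfl
  intro k
  cases ψ
  case dia n m M t φ =>
    refine Iff.trans ?_ gsys_img_iff.symm
    simp only [hev]
    exact sat_dia_iff
  case box n m M t φ =>
    refine Iff.trans ?_ gsys_img_iff.symm
    simp only [hev]
    exact (not_congr sat_box_iff).trans not_not
  all_goals
    refine ⟨fun _ => ⟨k, le_rfl, none, trivial, [], ?_⟩, fun _ => trivial⟩
    rw [fac_self]
    rfl

/-- All subformulas, including those in tests. -/
def subs : VLDL V A → List (VLDL V A)
  | .atom v => [.atom v]
  | .neg φ => .neg φ :: subs φ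
  | .and φ ψ => .and φ ψ :: (subs φ ++ subs ψ)
  | .or φ ψ => .or φ ψ :: (subs φ ++ subs ψ)
  | .dia n m M t φ => .dia n m M t φ :: (subs φ ++ (List.ofFn fun q => subs (t q)).flatten)
  | .box n m M t φ => .box n m M t φ :: (subs φ ++ (List.ofFn fun q => subs (t q)).flatten)

theorem self_mem_subs (φ : VLDL V A) : φ ∈ subs φ := by
  cases φ <;> simp [subs]

theorem length_subs_le (φ : VLDL V A) : (subs φ).length ≤ φ.size := by
  have aux : ∀ {n : ℕ} {t : Fin n → VLDL V A}, (∀ q, (subs (t q)).length ≤ (t q).size) →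
      (List.ofFn fun q => subs (t q)).flatten.length ≤ (List.ofFn fun q => (t q).size).sum := by
    intro n t h
    rw [List.length_flatten, List.map_ofFn, List.sum_ofFn, List.sum_ofFn]
    exact Finset.sum_le_sum fun q _ => h q
  induction φ with
  | atom v => simp [subs, VLDL.size]
  | neg φ ih => simp only [subs, VLDL.size, List.length_cons]; omega
  | and φ ψ ih1 ih2 =>
    simp only [subs, VLDL.size, List.length_cons, List.length_append]; omega
  | or φ ψ ih1 ih2 =>
    simp only [subs, VLDL.size, List.length_cons, List.length_append]; omega
  | dia n m M t φ iht ih =>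
    have := aux iht
    simp only [subs, VLDL.size, List.length_cons, List.length_append]; omega
  | box n m M t φ iht ih =>
    have := aux iht
    simp only [subs, VLDL.size, List.length_cons, List.length_append]; omega

theorem nOf_le_size {φ ψ : VLDL V A} (h : ψ ∈ subs φ) : nOf ψ ≤ φ.size := by
  have aux : ∀ {n : ℕ} {t : Fin n → VLDL V A}, (∀ q, ψ ∈ subs (t q) → nOf ψ ≤ (t q).size) →
      ψ ∈ (List.ofFn fun q => subs (t q)).flatten →
      nOf ψ ≤ (List.ofFn fun q => (t q).size).sum := by
    intro n t h h1
    simp only [List.mem_flatten, List.mem_ofFn, exists_exists_eq_and] at h1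
    obtain ⟨q, hq⟩ := h1
    rw [List.sum_ofFn]
    exact (h q hq).trans
      (Finset.single_le_sum (f := fun q => (t q).size) (fun _ _ => Nat.zero_le _)
        (Finset.mem_univ q))
  induction φ with
  | atom v =>
    rw [subs, List.mem_singleton] at h
    subst h; exact Nat.zero_le _
  | neg φ ih =>
    rw [subs, List.mem_cons] at h
    rcases h with rfl | h
    · exact Nat.zero_le _
    · have := ih h; rw [VLDL.size]; omega
  | and φ ψ ih1 ih2 =>
    rw [subs, List.mem_cons, List.mem_append] at h
    rcases h with rfl | h | h
    · exact Nat.zero_le _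
    · have := ih1 h; rw [VLDL.size]; omega
    · have := ih2 h; rw [VLDL.size]; omega
  | or φ ψ ih1 ih2 =>
    rw [subs, List.mem_cons, List.mem_append] at h
    rcases h with rfl | h | h
    · exact Nat.zero_le _
    · have := ih1 h; rw [VLDL.size]; omega
    · have := ih2 h; rw [VLDL.size]; omega
  | dia n m M t φ iht ih =>
    rw [subs, List.mem_cons, List.mem_append] at h
    rcases h with rfl | h | h
    · rw [VLDL.size, nOf]; omega
    · have := ih h; rw [VLDL.size]; omega
    · have := aux iht h; rw [VLDL.size]; omega
  | box n m M t φ iht ih =>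
    rw [subs, List.mem_cons, List.mem_append] at h
    rcases h with rfl | h | h
    · rw [VLDL.size, nOf]; omega
    · have := ih h; rw [VLDL.size]; omega
    · have := aux iht h; rw [VLDL.size]; omega

/-- The labels of a coherent word are the actual truth values. -/
theorem sat_iff_ev {φ : VLDL V A} (h : ∀ ψ ∈ subs φ,
      Coh (lkind kind) (sysOf val ψ) (startOf ψ) (labOf ψ) none β) (k : ℕ) :
    VLDL.sat val kind φ (fun i => (β i).1) k ↔ ev val φ (β k) := by
  have mem : ∀ {n : ℕ} {t : Fin n → VLDL V A} (q : Fin n) {ψ}, ψ ∈ subs (t q) →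
      ψ ∈ (List.ofFn fun q => subs (t q)).flatten := by
    intro n t q ψ hψ
    simp only [List.mem_flatten, List.mem_ofFn, exists_exists_eq_and]
    exact ⟨q, hψ⟩
  induction φ generalizing k with
  | atom v => rfl
  | neg φ ih =>
    have e1 := ih fun ψ hψ => h ψ (by simp [subs, hψ])
    exact not_congr (e1 k)
  | and φ ψ ih1 ih2 =>
    have e1 := ih1 fun ψ hψ => h ψ (by simp [subs, hψ])
    have e2 := ih2 fun ψ hψ => h ψ (by simp [subs, hψ])
    exact and_congr (e1 k) (e2 k)
  | or φ ψ ih1 ih2 =>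
    have e1 := ih1 fun ψ hψ => h ψ (by simp [subs, hψ])
    have e2 := ih2 fun ψ hψ => h ψ (by simp [subs, hψ])
    exact or_congr (e1 k) (e2 k)
  | dia n m M t φ iht ih =>
    have e1 := ih fun ψ hψ => h ψ
      (List.mem_cons_of_mem _ (List.mem_append_left _ hψ))
    have e2 := fun q => iht q fun ψ hψ => h ψ
      (List.mem_cons_of_mem _ (List.mem_append_right _ (mem q hψ)))
    rw [sat_dia_iff]
    simp only [e1, e2]
    exact ((h _ (self_mem_subs _) k).trans gsys_img_iff).symm
  | box n m M t φ iht ih =>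
    have e1 := ih fun ψ hψ => h ψ
      (List.mem_cons_of_mem _ (List.mem_append_left _ hψ))
    have e2 := fun q => iht q fun ψ hψ => h ψ
      (List.mem_cons_of_mem _ (List.mem_append_right _ (mem q hψ)))
    rw [sat_box_iff]
    simp only [e1, e2]
    have h1 := ((h _ (self_mem_subs _) k).trans gsys_img_iff).symm
    exact (not_congr h1).trans not_not

/-- The bound on the length of small models. -/
def bound (N : ℕ) : ℕ :=
  9 * 2 ^ (3 * (((2 ^ (N + 1)) ^ (N + 1) * (2 ^ 2 ^ (N + 1)) ^ 2) ^ N * 4))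

theorem card_TT_le {φ : VLDL V A} {N : ℕ} (hN : φ.size ≤ N) :
    Nat.card (TT fun ψ : {ψ // ψ ∈ subs φ} => Option (Fin (nOf ψ.1))) ≤
      ((2 ^ (N + 1)) ^ (N + 1) * (2 ^ 2 ^ (N + 1)) ^ 2) ^ N * 4 := by
  have : Finite {ψ // ψ ∈ subs φ} := (subs φ).finite_toSet
  have := Fintype.ofFinite {ψ // ψ ∈ subs φ}
  have hP : Nat.card Prop = 2 := by rw [Nat.card_eq_fintype_card, Fintype.card_prop]
  have hι : Fintype.card {ψ // ψ ∈ subs φ} ≤ N := by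
    refine le_trans ?_ ((length_subs_le φ).trans hN)
    rw [← Fintype.card_fin (subs φ).length]
    refine Fintype.card_le_of_surjective
      (fun i : Fin (subs φ).length => (⟨(subs φ).get i, List.get_mem _ _⟩ : {ψ // ψ ∈ subs φ})) ?_
    rintro ⟨ψ, hψ⟩
    obtain ⟨i, hi⟩ := List.mem_iff_get.1 hψ
    exact ⟨i, Subtype.ext hi⟩
  rw [TT, Nat.card_prod, Nat.card_pi, Nat.card_fun, hP]
  refine Nat.mul_le_mul ?_ le_rfl
  refine le_trans (Finset.prod_le_pow_card _ _
    ((2 ^ (N + 1)) ^ (N + 1) * (2 ^ 2 ^ (N + 1)) ^ 2) ?_) ?_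
  · rintro ⟨ψ, hψ⟩ -
    have hn : nOf ψ + 1 ≤ N + 1 := Nat.succ_le_succ ((nOf_le_size hψ).trans hN)
    have hQ : Nat.card (Option (Fin (nOf ψ))) = nOf ψ + 1 := by simp
    rw [Nat.card_prod]
    simp only [Nat.card_fun, hP, hQ]
    have h2 : 1 ≤ 2 ^ (N + 1) := Nat.one_le_two_pow
    gcongr <;> norm_num
  · rw [Finset.card_univ]
    exact Nat.pow_le_pow_right (by positivity) hι

/-- A formula violated somewhere is violated at some position of an ultimately periodic word
of bounded size. -/
theorem small_countermodel {φ : VLDL V A} {N : ℕ} (hN : φ.size ≤ N) {α : ℕ → A}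
    (hα : ¬ VLDL.sat val kind φ α 0) :
    ∃ (w : List A) (r j : ℕ), r < w.length ∧ w.length ≤ bound N ∧ j < w.length ∧
      ∀ a, ¬ VLDL.sat val kind φ (lw w a r 0) j := by
  have : Finite {ψ // ψ ∈ subs φ} := (subs φ).finite_toSet
  have hcoh := fun ψ : {ψ // ψ ∈ subs φ} => coh_sat (val := val) (kind := kind) α ψ.1
  have hφ : ¬ ev val φ (α 0, fun χ => VLDL.sat val kind χ α 0) := by
    have h := sat_iff_ev (φ := φ) (fun ψ hψ => hcoh ⟨ψ, hψ⟩) 0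
    exact fun he => hα (h.2 he)
  obtain ⟨u, v, hv, hlen, hu, hall⟩ := small_model (kd := lkind kind)
    (S := fun ψ : {ψ // ψ ∈ subs φ} => sysOf val ψ.1) (I := fun ψ => startOf ψ.1)
    (lab := fun ψ => labOf ψ.1) (P := fun b => ¬ ev val φ b) (top := fun _ => none)
    (fun ψ => sysOf_absorbing ψ.1) hcoh hφ
  have hv' : 0 < v.length := List.length_pos_iff.2 hv
  obtain ⟨b, hb, hbφ⟩ := hu
  obtain ⟨j, hj, rfl⟩ := List.mem_iff_getElem.1 hb
  refine ⟨(u ++ v).map Prod.fst, u.length, j, by simpa using hv', ?_, by simp; omega, ?_⟩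
  · rw [List.length_map, List.length_append]
    refine hlen.trans ?_
    rw [bound, ← mul_assoc]
    exact Nat.mul_le_mul le_rfl
      (Nat.pow_le_pow_right (by norm_num) (Nat.mul_le_mul le_rfl (card_TT_le hN)))
  · intro a
    have h := hall (lw (u ++ v) (a, fun _ => True) u.length 0)
      (fac_lw_left _) (fac_lw_right _)
    have hs := sat_iff_ev (φ := φ) (fun ψ hψ => h ⟨ψ, hψ⟩) j
    have e : (fun i => (lw (u ++ v) ((a, fun _ => True) : Lab V A) u.length 0 i).1) =
        lw ((u ++ v).map Prod.fst) a u.length 0 := by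
      funext i
      simp only [lw, List.length_map]
      exact (List.getD_map _ _ Prod.fst).symm
    rw [e] at hs
    rw [hs]
    have hj' : j < (u ++ v).length := by rw [List.length_append]; omega
    rwa [lw, nxt_iterate _ hj', List.getD_eq_getElem _ _ hj', List.getElem_append_left hj]

end Concrete

end VP

namespace VP

/-! ### Short accepting runs on ultimately periodic words -/

section Bounded

variable {A : Type} {n m : ℕ} (kind : A → SymKind) (M : VPAData A n m) (a : ℕ → A)
  (T : Fin n → ℕ → Prop) (G : ℕ → Prop) (nx : ℕ → ℕ)

/-- The analogue of `Acc` where letters, tests and goal depend on a position that is advanced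
by `nx`. -/
def PAcc : ℕ → ℕ → Fin n × List (Fin m) → Prop
  | 0, p, c => M.final c.1 = true ∧ T c.1 p ∧ G p
  | s + 1, p, c => T c.1 p ∧ ∃ c', M.step kind c (a p) c' ∧ PAcc s (nx p) c'

/-- The product of a guard with the finite set of positions, as a system whose letters are just
the kinds of letters. -/
def psys (K : ℕ) : Sys SymKind (Fin n × Fin K) (Fin m) where
  call x c x' g := kind (a x.2) = c ∧ x'.2.val = nx x.2 ∧ T x.1 x.2 ∧
    M.callΔ x.1 (a x.2) x'.1 g = true
  ret x c og x' := kind (a x.2) = c ∧ x'.2.val = nx x.2 ∧ T x.1 x.2 ∧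
    M.retΔ x.1 (a x.2) og x'.1 = true
  loc x c x' := kind (a x.2) = c ∧ x'.2.val = nx x.2 ∧ T x.1 x.2 ∧
    M.locΔ x.1 (a x.2) x'.1 = true

/-- The bound on the length of shortest accepting runs of a guard with `n` states on an
ultimately periodic word given by a word of length `K`. -/
def rbound (n K : ℕ) : ℕ := 6 * 2 ^ (3 * (2 ^ (n * K)) ^ (n * K))

variable {kind M a T G nx}

/-- Accepting runs on an ultimately periodic word depend only on the position inside the finite
word that represents it. -/
theorem acc_iff_pacc {pos : ℕ → ℕ} (hpos : ∀ i, pos (i + 1) = nx (pos i)) {s : ℕ} :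
    ∀ {k : ℕ} {c : Fin n × List (Fin m)},
      Acc kind M (fun i => a (pos i)) (fun q i => T q (pos i)) (fun i => G (pos i)) s k c ↔
        PAcc kind M a T G nx s (pos k) c := by
  induction s with
  | zero => intro k c; rfl
  | succ s ih =>
    intro k c
    simp only [Acc, PAcc, ih, hpos]

theorem psys_step {K : ℕ} {x x' : Fin n × Fin K} {σ σ' : List (Fin m)} :
    (∃ c, (psys kind M a T nx K).step id (x, σ) c (x', σ')) ↔
      x'.2.val = nx x.2 ∧ T x.1 x.2 ∧ M.step kind (x.1, σ) (a x.2) (x'.1, σ') := by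
  constructor
  · rintro ⟨c, h⟩
    cases c
    · obtain ⟨g, ⟨hc, hn, ht, hm⟩, hσ⟩ := h
      refine ⟨hn, ht, ?_⟩
      simp only [VPAData.step, vstep, hc]
      exact ⟨g, hm, hσ⟩
    · rcases h with ⟨g, s, hs, ⟨hc, hn, ht, hm⟩, hσ⟩ | ⟨hs, ⟨hc, hn, ht, hm⟩, hσ⟩
      · refine ⟨hn, ht, ?_⟩
        simp only [VPAData.step, vstep, hc]
        exact Or.inl ⟨g, s, hs, hm, hσ⟩
      · refine ⟨hn, ht, ?_⟩
        simp only [VPAData.step, vstep, hc]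
        exact Or.inr ⟨hs, hm, hσ⟩
    · obtain ⟨⟨hc, hn, ht, hm⟩, hσ⟩ := h
      refine ⟨hn, ht, ?_⟩
      simp only [VPAData.step, vstep, hc]
      exact ⟨hm, hσ⟩
  · rintro ⟨hn, ht, h⟩
    refine ⟨kind (a x.2), ?_⟩
    cases hc : kind (a x.2) <;> simp only [VPAData.step, vstep, hc] at h
    · obtain ⟨g, hm, hσ⟩ := h
      exact ⟨g, ⟨hc, hn, ht, hm⟩, hσ⟩
    · rcases h with ⟨g, s, hs, hm, hσ⟩ | ⟨hs, hm, hσ⟩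
      · exact Or.inl ⟨g, s, hs, ⟨hc, hn, ht, hm⟩, hσ⟩
      · exact Or.inr ⟨hs, ⟨hc, hn, ht, hm⟩, hσ⟩
    · exact ⟨⟨hc, hn, ht, h.1⟩, h.2⟩

theorem pacc_iff_run {K : ℕ} (hnx : ∀ p, p < K → nx p < K) {s : ℕ} :
    ∀ {x : Fin n × Fin K} {σ : List (Fin m)}, PAcc kind M a T G nx s x.2 (x.1, σ) ↔
      ∃ w x' σ', w.length = s ∧ (psys kind M a T nx K).Run id (x, σ) w (x', σ') ∧
        M.final x'.1 = true ∧ T x'.1 x'.2 ∧ G x'.2 := by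
  induction s with
  | zero =>
    intro x σ
    constructor
    · intro h; exact ⟨[], x, σ, rfl, rfl, h⟩
    · rintro ⟨w, x', σ', hw, hr, h⟩
      obtain rfl := List.length_eq_zero_iff.1 hw
      obtain ⟨rfl, rfl⟩ := Prod.mk.inj hr
      exact h
  | succ s ih =>
    intro x σ
    constructor
    · rintro ⟨ht, ⟨q', τ⟩, hstep, h⟩
      obtain ⟨w, x', σ', hw, hr, h'⟩ :=
        (ih (x := (q', ⟨nx x.2, hnx _ x.2.isLt⟩)) (σ := τ)).1 h
      obtain ⟨c, hc⟩ := (psys_step (x := x) (x' := (q', ⟨nx x.2, hnx _ x.2.isLt⟩))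
        (kind := kind) (M := M) (a := a) (T := T) (nx := nx)).2 ⟨rfl, ht, hstep⟩
      exact ⟨c :: w, x', σ', by rw [List.length_cons, hw], ⟨_, hc, hr⟩, h'⟩
    · rintro ⟨w, x', σ', hw, hr, h'⟩
      cases w with
      | nil => simp at hw
      | cons c w =>
        obtain ⟨⟨y, τ⟩, hc, hr⟩ := hr
        obtain ⟨hn, ht, hstep⟩ := psys_step.1 ⟨c, hc⟩
        refine ⟨ht, _, hstep, ?_⟩
        have := (ih (x := y) (σ := τ)).2 ⟨w, x', σ', by simpa using hw, hr, h'⟩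
        rwa [hn] at this

/-- Accepting runs from the empty stack can be shortened. -/
theorem pacc_bound {K : ℕ} (hnx : ∀ p, p < K → nx p < K) {p : ℕ} (hp : p < K) {q : Fin n}
    {s : ℕ} (h : PAcc kind M a T G nx s p (q, [])) :
    ∃ s' ≤ rbound n K, PAcc kind M a T G nx s' p (q, []) := by
  let S := psys kind M a T nx K
  obtain ⟨w, x', σ', -, hr, h'⟩ := (pacc_iff_run hnx (x := (q, ⟨p, hp⟩))).1 h
  obtain ⟨x, y, rfl, hx, hy⟩ := exists_split (kd := id) w
  have happ : ∀ m x y x' y', Der id m x → Der id m x' → Der id m y → Der id m y' →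
      S.R id x = S.R id x' → S.R id y = S.R id y' → S.R id (x ++ y) = S.R id (x' ++ y') := by
    intro m x y x' y' h1 h2 h3 h4 h5 h6
    funext q q'
    rw [R_append (compat_of_der h1 h3), R_append (compat_of_der h2 h4), h5, h6]
  have hnest : ∀ c r w w', id c = SymKind.call → id r = SymKind.ret → Der id .bal w →
      Der id .bal w' → S.R id w = S.R id w' →
      S.R id (c :: (w ++ [r])) = S.R id (c :: (w' ++ [r])) := by
    intro c r w w' hc hr h1 h2 h3
    funext q q'
    rw [R_nest hc hr h1, R_nest hc hr h2, h3]
  obtain ⟨x1, hx1, ex, lx⟩ := small_rep (S.R id) happ hnest hx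
  obtain ⟨y1, hy1, ey, ly⟩ := small_rep (S.R id) happ hnest hy
  have hcomp : ∀ {x y : List SymKind}, Der id .rets x → S.Compat id x y :=
    fun h => Or.inl ((nr_nc_of_der h).2 (by decide))
  have hR : S.R id (x1 ++ y1) (q, ⟨p, hp⟩) x' := by
    have h0 : S.R id (x ++ y) (q, ⟨p, hp⟩) x' := ⟨_, hr⟩
    rwa [R_append (hcomp hx), ← ex, ← ey, ← R_append (hcomp hx1)] at h0
  obtain ⟨τ, hτ⟩ := hR
  refine ⟨(x1 ++ y1).length, ?_, (pacc_iff_run hnx (x := (q, ⟨p, hp⟩))).2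
    ⟨_, x', τ, rfl, hτ, h'⟩⟩
  have hcard : Nat.card (Fin n × Fin K → Fin n × Fin K → Prop) =
      (2 ^ (n * K)) ^ (n * K) := by
    simp [Nat.card_eq_fintype_card]
  rw [hcard] at lx ly
  rw [List.length_append, rbound]
  omega

end Bounded

end VP

namespace VP

/-! ### Primitive recursive building blocks -/

section PrimrecLemmas

attribute [local fun_prop] Primrec

variable {α β σ τ : Type} [Primcodable α] [Primcodable β] [Primcodable σ] [Primcodable τ]

@[fun_prop] theorem pr_id : Primrec fun a : α => a := Primrec.id

@[fun_prop] theorem pr_const (x : σ) : Primrec fun _ : α => x := Primrec.const x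

@[fun_prop] theorem pr_comp {f : β → σ} {g : α → β} (hf : Primrec f) (hg : Primrec g) :
    Primrec fun a => f (g a) := hf.comp hg

@[fun_prop] theorem pr_fst {f : α → β × σ} (hf : Primrec f) : Primrec fun a => (f a).1 :=
  Primrec.fst.comp hf

@[fun_prop] theorem pr_snd {f : α → β × σ} (hf : Primrec f) : Primrec fun a => (f a).2 :=
  Primrec.snd.comp hf

@[fun_prop] theorem pr_pair {f : α → β} {g : α → σ} (hf : Primrec f) (hg : Primrec g) :
    Primrec fun a => (f a, g a) := hf.pair hg

@[fun_prop] theorem pr_unpair {f : α → ℕ} (hf : Primrec f) : Primrec fun a => (f a).unpair :=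
  Primrec.unpair.comp hf

@[fun_prop] theorem pr_add {f g : α → ℕ} (hf : Primrec f) (hg : Primrec g) :
    Primrec fun a => f a + g a := Primrec.nat_add.comp hf hg

@[fun_prop] theorem pr_mul {f g : α → ℕ} (hf : Primrec f) (hg : Primrec g) :
    Primrec fun a => f a * g a := Primrec.nat_mul.comp hf hg

@[fun_prop] theorem pr_div {f g : α → ℕ} (hf : Primrec f) (hg : Primrec g) :
    Primrec fun a => f a / g a := Primrec.nat_div.comp hf hg

@[fun_prop] theorem pr_mod {f g : α → ℕ} (hf : Primrec f) (hg : Primrec g) :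
    Primrec fun a => f a % g a := Primrec.nat_mod.comp hf hg

@[fun_prop] theorem pr_pow {f g : α → ℕ} (hf : Primrec f) (hg : Primrec g) :
    Primrec fun a => f a ^ g a :=
  (Primrec₂.unpaired'.1 Nat.Primrec.pow : Primrec₂ ((· ^ ·) : ℕ → ℕ → ℕ)).comp hf hg

@[fun_prop] theorem pr_not {f : α → Bool} (hf : Primrec f) : Primrec fun a => !f a :=
  (Primrec.dom_bool _).comp hf

@[fun_prop] theorem pr_and {f g : α → Bool} (hf : Primrec f) (hg : Primrec g) :
    Primrec fun a => f a && g a := (Primrec.dom_bool₂ (· && ·)).comp hf hg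

@[fun_prop] theorem pr_or {f g : α → Bool} (hf : Primrec f) (hg : Primrec g) :
    Primrec fun a => f a || g a := (Primrec.dom_bool₂ (· || ·)).comp hf hg

@[fun_prop] theorem pr_beq {f g : α → ℕ} (hf : Primrec f) (hg : Primrec g) :
    Primrec fun a => f a == g a := Primrec.beq.comp hf hg

@[fun_prop] theorem pr_cond {c : α → Bool} {f g : α → σ} (hc : Primrec c) (hf : Primrec f)
    (hg : Primrec g) : Primrec fun a => bif c a then f a else g a := Primrec.cond hc hf hg

@[fun_prop] theorem pr_nxt {f g h : α → ℕ} (hf : Primrec f) (hg : Primrec g) (hh : Primrec h) :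
    Primrec fun a => nxt (f a) (g a) (h a) :=
  Primrec.ite (Primrec.nat_lt.comp (pr_add hh (pr_const 1)) hf) (pr_add hh (pr_const 1)) hg

@[fun_prop] theorem pr_cons {f : α → β} {g : α → List β} (hf : Primrec f) (hg : Primrec g) :
    Primrec fun a => f a :: g a := Primrec.list_cons.comp hf hg

@[fun_prop] theorem pr_append {f g : α → List β} (hf : Primrec f) (hg : Primrec g) :
    Primrec fun a => f a ++ g a := Primrec.list_append.comp hf hg

@[fun_prop] theorem pr_length {f : α → List β} (hf : Primrec f) :
    Primrec fun a => (f a).length := Primrec.list_length.comp hf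

@[fun_prop] theorem pr_tail {f : α → List β} (hf : Primrec f) :
    Primrec fun a => (f a).tail := Primrec.list_tail.comp hf

@[fun_prop] theorem pr_getD {f : α → List β} {g : α → ℕ} (d : β) (hf : Primrec f)
    (hg : Primrec g) : Primrec fun a => (f a).getD (g a) d :=
  (Primrec.list_getD d).comp hf hg

@[fun_prop] theorem pr_range {f : α → ℕ} (hf : Primrec f) :
    Primrec fun a => List.range (f a) := Primrec.list_range.comp hf

@[fun_prop] theorem pr_map {f : α → List β} {g : α → β → σ} (hf : Primrec f)
    (hg : Primrec fun p : α × β => g p.1 p.2) : Primrec fun a => (f a).map (g a) :=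
  Primrec.list_map hf hg

@[fun_prop] theorem pr_flatMap {f : α → List β} {g : α → β → List σ} (hf : Primrec f)
    (hg : Primrec fun p : α × β => g p.1 p.2) : Primrec fun a => (f a).flatMap (g a) :=
  Primrec.list_flatMap hf hg

@[fun_prop] theorem pr_any {f : α → List β} {g : α → β → Bool} (hf : Primrec f)
    (hg : Primrec fun p : α × β => g p.1 p.2) : Primrec fun a => (f a).any (g a) := by
  have h : Primrec fun a => (f a).foldr (fun b s => g a b || s) false := by
    refine Primrec.list_foldr (h := fun a (q : β × Bool) => g a q.1 || q.2) hf
      (pr_const false) (Primrec₂.mk ?_)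
    exact pr_or (hg.comp (Primrec.fst.pair (Primrec.fst.comp Primrec.snd)))
      (Primrec.snd.comp Primrec.snd)
  refine h.of_eq fun a => ?_
  induction f a with
  | nil => rfl
  | cons b l ih => rw [List.foldr_cons, ih, List.any_cons]

@[fun_prop] theorem pr_all {f : α → List β} {g : α → β → Bool} (hf : Primrec f)
    (hg : Primrec fun p : α × β => g p.1 p.2) : Primrec fun a => (f a).all (g a) := by
  have h : Primrec fun a => !((f a).any fun b => !g a b) := by fun_prop
  refine h.of_eq fun a => ?_
  rw [List.any_eq_not_all_not]; simp

@[fun_prop] theorem pr_iterate {f : α → ℕ} {g : α → β} {h : α → β → β} (hf : Primrec f)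
    (hg : Primrec g) (hh : Primrec fun p : α × β => h p.1 p.2) :
    Primrec fun a => (h a)^[f a] (g a) := Primrec.nat_iterate hf hg hh

theorem pr_decode (d : σ) {f : α → ℕ} (hf : Primrec f) :
    Primrec fun a => (Encodable.decode (f a) : Option σ).getD d :=
  Primrec.option_getD.comp (Primrec.decode.comp hf) (Primrec.const d)

/-! ### The algorithm -/

/-- Transition tables of a guard, in the format of `VPAData.codeP`: number of states, number of
stack symbols, call transitions, return transitions on stack symbols, return transitions on the
bottom marker, local transitions, initial states, final states. -/
abbrev Aut := ℕ × ℕ × List (List (List (List Bool))) × List (List (List (List Bool))) ×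
  List (List (List Bool)) × List (List (List Bool)) × List Bool × List Bool

/-- A state, a position and a stack. -/
abbrev Conf := ℕ × ℕ × List ℕ

/-- The kinds of the letters, a word `w` of letters, the position `r` to which the last position
of `w` is looped back, and a bound on the length of runs. -/
abbrev Ctx := List ℕ × List ℕ × ℕ × ℕ

/-- A context together with a guard, the truth tables of its tests, and the truth table of the
goal formula. -/
abbrev Env := Ctx × Aut × List (List Bool) × List Bool

/-- Entry of a three-dimensional table. -/
def get3 (t : List (List (List Bool))) (i j k : ℕ) : Bool :=
  ((t.getD i []).getD j []).getD k false

/-- Entry of a four-dimensional table. -/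
def get4 (t : List (List (List (List Bool)))) (i j k l : ℕ) : Bool :=
  (((t.getD i []).getD j []).getD k []).getD l false

@[fun_prop] theorem pr_get3 {t : α → List (List (List Bool))} {i j k : α → ℕ} (ht : Primrec t)
    (hi : Primrec i) (hj : Primrec j) (hk : Primrec k) :
    Primrec fun a => get3 (t a) (i a) (j a) (k a) := by
  unfold get3; fun_prop

@[fun_prop] theorem pr_get4 {t : α → List (List (List (List Bool)))} {i j k l : α → ℕ}
    (ht : Primrec t) (hi : Primrec i) (hj : Primrec j) (hk : Primrec k) (hl : Primrec l) :
    Primrec fun a => get4 (t a) (i a) (j a) (k a) (l a) := by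
  unfold get4; fun_prop

/-- The letter read in a configuration. -/
def letter (e : Env) (x : Conf) : ℕ := e.1.2.1.getD x.2.1 0

/-- The next position. -/
def npos (e : Env) (x : Conf) : ℕ := nxt e.1.2.1.length e.1.2.2.1 x.2.1

@[fun_prop] theorem pr_letter {e : α → Env} {x : α → Conf} (he : Primrec e) (hx : Primrec x) :
    Primrec fun a => letter (e a) (x a) := by
  unfold letter; fun_prop

@[fun_prop] theorem pr_npos {e : α → Env} {x : α → Conf} (he : Primrec e) (hx : Primrec x) :
    Primrec fun a => npos (e a) (x a) := by
  unfold npos; fun_prop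

/-- Successors by a call. -/
def succCall (e : Env) (x : Conf) : List Conf :=
  (List.range e.2.1.1).flatMap fun q' => (List.range e.2.1.2.1).flatMap fun g =>
    bif get4 e.2.1.2.2.1 x.1 (letter e x) q' g then [(q', npos e x, g :: x.2.2)] else []

/-- Successors by a return on the empty stack. -/
def succBot (e : Env) (x : Conf) : List Conf :=
  (List.range e.2.1.1).flatMap fun q' =>
    bif get3 e.2.1.2.2.2.2.1 x.1 (letter e x) q' then [(q', npos e x, [])] else []

/-- Successors by a return on a nonempty stack. -/
def succRet (e : Env) (x : Conf) : List Conf :=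
  (List.range e.2.1.1).flatMap fun q' =>
    bif get4 e.2.1.2.2.2.1 x.1 (letter e x) (x.2.2.getD 0 0) q'
      then [(q', npos e x, x.2.2.tail)] else []

/-- Successors by a local action. -/
def succLoc (e : Env) (x : Conf) : List Conf :=
  (List.range e.2.1.1).flatMap fun q' =>
    bif get3 e.2.1.2.2.2.2.2.1 x.1 (letter e x) q' then [(q', npos e x, x.2.2)] else []

/-- The test of the current state at the current position. -/
def test (e : Env) (x : Conf) : Bool := (e.2.2.1.getD x.1 []).getD x.2.1 false

/-- All successors of a configuration whose test succeeds. -/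
def succs (e : Env) (x : Conf) : List Conf :=
  bif test e x then
    bif e.1.1.getD (letter e x) 0 == 0 then succCall e x
    else bif e.1.1.getD (letter e x) 0 == 1 then
      bif x.2.2.length == 0 then succBot e x else succRet e x
    else succLoc e x
  else []

/-- Whether a configuration ends an accepting run. -/
def accs (e : Env) (x : Conf) : Bool :=
  e.2.1.2.2.2.2.2.2.2.getD x.1 false && test e x && e.2.2.2.getD x.2.1 false

/-- The initial configurations at position `k`. -/
def inits (e : Env) (k : ℕ) : List Conf :=
  (List.range e.2.1.1).flatMap fun q =>
    bif e.2.1.2.2.2.2.2.2.1.getD q false then [(q, k, [])] else []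

/-- Whether there is a sufficiently short accepting run from position `k`. -/
def search (e : Env) (k : ℕ) : Bool :=
  (List.range (e.1.2.2.2 + 1)).any fun s =>
    ((fun L : List Conf => L.flatMap (succs e))^[s] (inits e k)).any (accs e)

@[fun_prop] theorem pr_succCall {e : α → Env} {x : α → Conf} (he : Primrec e)
    (hx : Primrec x) : Primrec fun a => succCall (e a) (x a) := by
  unfold succCall; fun_prop

@[fun_prop] theorem pr_succBot {e : α → Env} {x : α → Conf} (he : Primrec e)
    (hx : Primrec x) : Primrec fun a => succBot (e a) (x a) := by
  unfold succBot; fun_prop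

@[fun_prop] theorem pr_succRet {e : α → Env} {x : α → Conf} (he : Primrec e)
    (hx : Primrec x) : Primrec fun a => succRet (e a) (x a) := by
  unfold succRet; fun_prop

@[fun_prop] theorem pr_succLoc {e : α → Env} {x : α → Conf} (he : Primrec e)
    (hx : Primrec x) : Primrec fun a => succLoc (e a) (x a) := by
  unfold succLoc; fun_prop

@[fun_prop] theorem pr_test {e : α → Env} {x : α → Conf} (he : Primrec e)
    (hx : Primrec x) : Primrec fun a => test (e a) (x a) := by
  unfold test; fun_prop

@[fun_prop] theorem pr_succs {e : α → Env} {x : α → Conf} (he : Primrec e)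
    (hx : Primrec x) : Primrec fun a => succs (e a) (x a) := by
  unfold succs; fun_prop

@[fun_prop] theorem pr_accs {e : α → Env} {x : α → Conf} (he : Primrec e)
    (hx : Primrec x) : Primrec fun a => accs (e a) (x a) := by
  unfold accs; fun_prop

@[fun_prop] theorem pr_inits {e : α → Env} {k : α → ℕ} (he : Primrec e)
    (hk : Primrec k) : Primrec fun a => inits (e a) (k a) := by
  unfold inits; fun_prop

@[fun_prop] theorem pr_search {e : α → Env} {k : α → ℕ} (he : Primrec e)
    (hk : Primrec k) : Primrec fun a => search (e a) (k a) := by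
  unfold search; fun_prop

/-- Decoding of a guard. -/
def decAut (i : ℕ) : Aut := (Encodable.decode i : Option Aut).getD default

/-- Decoding of a list of natural numbers. -/
def decList (i : ℕ) : List ℕ := (Encodable.decode i : Option (List ℕ)).getD []

@[fun_prop] theorem pr_decAut {f : α → ℕ} (hf : Primrec f) : Primrec fun a => decAut (f a) :=
  pr_decode _ hf

@[fun_prop] theorem pr_decList {f : α → ℕ} (hf : Primrec f) : Primrec fun a => decList (f a) :=
  pr_decode _ hf

/-- The truth table (indexed by the positions of the word of `c`) of an atom. -/
def tabAtom (c : Ctx) (v : ℕ) : List Bool := c.2.1.map fun i => (i / 2 ^ v) % 2 == 1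

/-- The truth table of a negation. -/
def tabNot (c : Ctx) (t : List Bool) : List Bool :=
  (List.range c.2.1.length).map fun k => !t.getD k false

/-- The truth table of a conjunction. -/
def tabAnd (c : Ctx) (t u : List Bool) : List Bool :=
  (List.range c.2.1.length).map fun k => t.getD k false && u.getD k false

/-- The truth table of a disjunction. -/
def tabOr (c : Ctx) (t u : List Bool) : List Bool :=
  (List.range c.2.1.length).map fun k => t.getD k false || u.getD k false

/-- The truth table of a diamond formula, given the code of the guard and the truth tables of its
tests and of the goal. -/
def tabDia (c : Ctx) (i : ℕ) (ts : List (List Bool)) (gl : List Bool) : List Bool :=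
  (List.range c.2.1.length).map fun k => search (c, decAut i, ts, gl) k

@[fun_prop] theorem pr_tabAtom {c : α → Ctx} {v : α → ℕ} (hc : Primrec c) (hv : Primrec v) :
    Primrec fun a => tabAtom (c a) (v a) := by
  unfold tabAtom; fun_prop

@[fun_prop] theorem pr_tabNot {c : α → Ctx} {t : α → List Bool} (hc : Primrec c)
    (ht : Primrec t) : Primrec fun a => tabNot (c a) (t a) := by
  unfold tabNot; fun_prop

@[fun_prop] theorem pr_tabAnd {c : α → Ctx} {t u : α → List Bool} (hc : Primrec c)
    (ht : Primrec t) (hu : Primrec u) : Primrec fun a => tabAnd (c a) (t a) (u a) := by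
  unfold tabAnd; fun_prop

@[fun_prop] theorem pr_tabOr {c : α → Ctx} {t u : α → List Bool} (hc : Primrec c)
    (ht : Primrec t) (hu : Primrec u) : Primrec fun a => tabOr (c a) (t a) (u a) := by
  unfold tabOr; fun_prop

@[fun_prop] theorem pr_tabDia {c : α → Ctx} {i : α → ℕ} {ts : α → List (List Bool)}
    {gl : α → List Bool} (hc : Primrec c) (hi : Primrec i) (hts : Primrec ts)
    (hgl : Primrec gl) : Primrec fun a => tabDia (c a) (i a) (ts a) (gl a) := by
  unfold tabDia; fun_prop

/-- The truth tables of the tests whose codes are listed in the list coded by `i`, looked up in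
the list `l` of truth tables of all smaller codes. -/
def tests (l : List (List Bool)) (i : ℕ) : List (List Bool) :=
  (decList i).map fun j => l.getD j []

@[fun_prop] theorem pr_tests {l : α → List (List Bool)} {i : α → ℕ} (hl : Primrec l)
    (hi : Primrec i) : Primrec fun a => tests (l a) (i a) := by
  unfold tests; fun_prop

/-- The truth table of the formula with code `i`, given the list `l` of the truth tables of all
smaller codes. -/
def bodyAt (c : Ctx) (l : List (List Bool)) (i : ℕ) : List Bool :=
  bif i.unpair.1 == 0 then tabAtom c i.unpair.2
  else bif i.unpair.1 == 1 then tabNot c (l.getD i.unpair.2 [])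
  else bif i.unpair.1 == 2 then
    tabAnd c (l.getD i.unpair.2.unpair.1 []) (l.getD i.unpair.2.unpair.2 [])
  else bif i.unpair.1 == 3 then
    tabOr c (l.getD i.unpair.2.unpair.1 []) (l.getD i.unpair.2.unpair.2 [])
  else bif i.unpair.1 == 4 then
    tabDia c i.unpair.2.unpair.1 (tests l i.unpair.2.unpair.2.unpair.1)
      (l.getD i.unpair.2.unpair.2.unpair.2 [])
  else
    tabNot c (tabDia c i.unpair.2.unpair.1 (tests l i.unpair.2.unpair.2.unpair.1)
      (tabNot c (l.getD i.unpair.2.unpair.2.unpair.2 [])))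

@[fun_prop] theorem pr_bodyAt {c : α → Ctx} {l : α → List (List Bool)} {i : α → ℕ}
    (hc : Primrec c) (hl : Primrec l) (hi : Primrec i) :
    Primrec fun a => bodyAt (c a) (l a) (i a) := by
  unfold bodyAt; fun_prop

/-- The list of the truth tables of all codes smaller than `i`. -/
def build (c : Ctx) (i : ℕ) : List (List Bool) :=
  (fun l : List (List Bool) => l ++ [bodyAt c l l.length])^[i] []

/-- The truth table of the formula with code `i`. -/
def table (c : Ctx) (i : ℕ) : List Bool := bodyAt c (build c i) i

@[fun_prop] theorem pr_build {c : α → Ctx} {i : α → ℕ} (hc : Primrec c) (hi : Primrec i) :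
    Primrec fun a => build (c a) (i a) := by
  unfold build; fun_prop

@[fun_prop] theorem pr_table {c : α → Ctx} {i : α → ℕ} (hc : Primrec c) (hi : Primrec i) :
    Primrec fun a => table (c a) (i a) := by
  unfold table; fun_prop

@[fun_prop] theorem pr_bound {f : α → ℕ} (hf : Primrec f) : Primrec fun a => bound (f a) := by
  unfold bound; fun_prop

@[fun_prop] theorem pr_rbound {f g : α → ℕ} (hf : Primrec f) (hg : Primrec g) :
    Primrec fun a => rbound (f a) (g a) := by
  unfold rbound; fun_prop

/-- All words of length `L` over the letters `0, …, 2 ^ p - 1`. -/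
def words (p L : ℕ) : List (List ℕ) :=
  (fun ls : List (List ℕ) => ls.flatMap fun l => (List.range (2 ^ p)).map fun i => i :: l)^[L]
    [[]]

@[fun_prop] theorem pr_words {f g : α → ℕ} (hf : Primrec f) (hg : Primrec g) :
    Primrec fun a => words (f a) (g a) := by
  unfold words; fun_prop

/-- Whether the formula with code `i` holds at all positions of all ultimately periodic words
given by the word `w`, where `ks` lists the kinds of the letters. -/
def checkWord (ks w : List ℕ) (i : ℕ) : Bool :=
  (List.range w.length).all fun r =>
    (List.range w.length).all fun k =>
      (table (ks, w, r, rbound (i + 1) w.length) i).getD k false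

@[fun_prop] theorem pr_checkWord {f g : α → List ℕ} {i : α → ℕ} (hf : Primrec f)
    (hg : Primrec g) (hi : Primrec i) : Primrec fun a => checkWord (f a) (g a) (i a) := by
  unfold checkWord; fun_prop

/-- The decision procedure for validity, given the number of propositions, the kinds of the
letters, and the code of the formula. -/
def decideValid (p : ℕ) (ks : List ℕ) (i : ℕ) : Bool :=
  (List.range (bound (i + 1) + 1)).all fun L => (words p L).all fun w => checkWord ks w i

@[fun_prop] theorem pr_decideValid {p i : α → ℕ} {ks : α → List ℕ} (hp : Primrec p)
    (hk : Primrec ks) (hi : Primrec i) : Primrec fun a => decideValid (p a) (ks a) (i a) := by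
  unfold decideValid; fun_prop

/-- The decision procedure on coded inputs. -/
def decideCode (x : ℕ) : Bool :=
  decideValid x.unpair.1 (decList x.unpair.2.unpair.1) x.unpair.2.unpair.2

theorem computable_decideCode : Computable decideCode := by
  have : Primrec fun x => decideCode x := by unfold decideCode; fun_prop
  exact this.to_comp

end PrimrecLemmas

end VP

namespace VP

/-! ### Correctness of the algorithm -/

section Correct

theorem build_eq (c : Ctx) (i : ℕ) : build c i = (List.range i).map (table c) := by
  induction i with
  | zero => rfl
  | succ i ih =>
    have h : build c (i + 1) = build c i ++ [bodyAt c (build c i) (build c i).length] := by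
      unfold build; rw [Function.iterate_succ_apply']
    have hl : (build c i).length = i := by rw [ih]; simp
    rw [h, hl, List.range_succ, List.map_append, ← ih]; rfl

theorem build_getD (c : Ctx) {i j : ℕ} (h : j < i) : (build c i).getD j [] = table c j := by
  rw [build_eq]; simp [List.getD, h]

theorem getD_range_map {f : ℕ → Bool} {n i : ℕ} (h : i < n) :
    ((List.range n).map f).getD i false = f i := by
  simp [List.getD, h]

theorem getD_ofFn {β : Type} {n : ℕ} (f : Fin n → β) (i : Fin n) (d : β) :
    (List.ofFn f).getD i d = f i := by
  simp [List.getD]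

theorem mem_cond {β : Type} {b : Bool} {x y : β} :
    x ∈ (bif b then [y] else []) ↔ b = true ∧ x = y := by
  cases b <;> simp

theorem mem_flatMap_range {β : Type} {n : ℕ} {f : ℕ → List β} {x : β} :
    x ∈ (List.range n).flatMap f ↔ ∃ i : Fin n, x ∈ f i := by
  simp only [List.mem_flatMap, List.mem_range]
  exact ⟨fun ⟨i, hi, h⟩ => ⟨⟨i, hi⟩, h⟩, fun ⟨i, h⟩ => ⟨i, i.isLt, h⟩⟩

section Step

variable {P n m : ℕ} (kind : (Fin P → Bool) → SymKind) (M : VPAData (Fin P → Bool) n m)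

/-- The list of the kinds of all letters. -/
def kindsOf : List ℕ := List.ofFn fun i : Fin (2 ^ P) => symCode (kind (letterOf P i.val))

/-- The transition tables of a guard. -/
def autOf : Aut :=
  (n, m,
      List.ofFn (fun q : Fin n => List.ofFn (fun i : Fin (2 ^ P) =>
        List.ofFn (fun q' : Fin n => List.ofFn (fun g : Fin m =>
          M.callΔ q (letterOf P i.val) q' g)))),
      List.ofFn (fun q : Fin n => List.ofFn (fun i : Fin (2 ^ P) =>
        List.ofFn (fun g : Fin m => List.ofFn (fun q' : Fin n =>
          M.retΔ q (letterOf P i.val) (some g) q')))),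
      List.ofFn (fun q : Fin n => List.ofFn (fun i : Fin (2 ^ P) =>
        List.ofFn (fun q' : Fin n => M.retΔ q (letterOf P i.val) none q'))),
      List.ofFn (fun q : Fin n => List.ofFn (fun i : Fin (2 ^ P) =>
        List.ofFn (fun q' : Fin n => M.locΔ q (letterOf P i.val) q'))),
      List.ofFn (fun q : Fin n => M.start q),
      List.ofFn (fun q : Fin n => M.final q))

theorem decAut_codeP : decAut M.codeP = autOf M := by
  have : M.codeP = Encodable.encode (autOf M) := rfl
  rw [decAut, this, Encodable.encodek]; rfl

theorem decList_kindCode : decList (kindCode P kind) = kindsOf kind := by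
  have : kindCode P kind = Encodable.encode (kindsOf kind) := rfl
  rw [decList, this, Encodable.encodek]; rfl

theorem get4_call (q q' : Fin n) (g : Fin m) {i : ℕ} (hi : i < 2 ^ P) :
    get4 (autOf M).2.2.1 q i q' g = M.callΔ q (letterOf P i) q' g := by
  have := fun f : Fin (2 ^ P) → List (List Bool) => getD_ofFn f ⟨i, hi⟩ []
  simp only at this
  simp only [get4, autOf, getD_ofFn, this]

theorem get4_ret (q q' : Fin n) (g : Fin m) {i : ℕ} (hi : i < 2 ^ P) :
    get4 (autOf M).2.2.2.1 q i g q' = M.retΔ q (letterOf P i) (some g) q' := by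
  have := fun f : Fin (2 ^ P) → List (List Bool) => getD_ofFn f ⟨i, hi⟩ []
  simp only at this
  simp only [get4, autOf, getD_ofFn, this]

theorem get3_bot (q q' : Fin n) {i : ℕ} (hi : i < 2 ^ P) :
    get3 (autOf M).2.2.2.2.1 q i q' = M.retΔ q (letterOf P i) none q' := by
  have := fun f : Fin (2 ^ P) → List Bool => getD_ofFn f ⟨i, hi⟩ []
  simp only at this
  simp only [get3, autOf, getD_ofFn, this]

theorem get3_loc (q q' : Fin n) {i : ℕ} (hi : i < 2 ^ P) :
    get3 (autOf M).2.2.2.2.2.1 q i q' = M.locΔ q (letterOf P i) q' := by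
  have := fun f : Fin (2 ^ P) → List Bool => getD_ofFn f ⟨i, hi⟩ []
  simp only at this
  simp only [get3, autOf, getD_ofFn, this]

/-- Encoding of configurations. -/
def emb (p : ℕ) (c : Fin n × List (Fin m)) : Conf := (c.1, p, c.2.map Fin.val)

variable (w : List ℕ) (r fuel : ℕ) (ts : List (List Bool)) (gl : List Bool)

/-- The environment of a run of `M`. -/
def envOf : Env := ((kindsOf kind, w, r, fuel), autOf M, ts, gl)

/-- The test relation given by a list of truth tables. -/
def TestRel (q : Fin n) (p : ℕ) : Prop := (ts.getD q []).getD p false = true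

/-- The goal given by a truth table. -/
def GoalRel (p : ℕ) : Prop := gl.getD p false = true

variable {kind M w r fuel ts gl}

/-- The computed successors are the codes of the successors of a configuration. -/
theorem mem_succs {p : ℕ} (hw : w.getD p 0 < 2 ^ P) {c : Fin n × List (Fin m)} {y : Conf} :
    y ∈ succs (envOf kind M w r fuel ts gl) (emb p c) ↔ TestRel ts c.1 p ∧
      ∃ c', M.step kind c (letterOf P (w.getD p 0)) c' ∧ y = emb (nxt w.length r p) c' := by
  obtain ⟨q, σ⟩ := c
  set e := envOf kind M w r fuel ts gl with he
  have hl : letter e (emb p (q, σ)) = w.getD p 0 := rfl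
  have hn : npos e (emb p (q, σ)) = nxt w.length r p := rfl
  have ht : test e (emb p (q, σ)) = true ↔ TestRel ts q p := Iff.rfl
  have hk : e.1.1.getD (w.getD p 0) 0 = symCode (kind (letterOf P (w.getD p 0))) :=
    getD_ofFn (fun i : Fin (2 ^ P) => symCode (kind (letterOf P i.val))) ⟨_, hw⟩ 0
  have hx1 : (emb p (q, σ)).1 = q := rfl
  have hx2 : (emb p (q, σ)).2.2 = σ.map Fin.val := rfl
  have he1 : e.2.1 = autOf M := rfl
  have hen : (autOf M).1 = n := rfl
  have hem : (autOf M).2.1 = m := rfl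
  unfold succs
  rw [hl, hk]
  by_cases hT : TestRel ts q p
  swap
  · rw [Bool.eq_false_iff.2 (mt ht.1 hT)]
    simp [hT]
  rw [ht.2 hT]
  simp only [hT, true_and, cond_true, VPAData.step, vstep]
  cases hkk : kind (letterOf P (w.getD p 0))
  · simp only [symCode, BEq.rfl, cond_true, succCall, he1, hl, hn, hx1, hx2]
    simp only [mem_flatMap_range, mem_cond, hen, hem]
    constructor
    · rintro ⟨q', g, h, rfl⟩
      rw [get4_call _ _ _ _ hw] at h
      exact ⟨(q', g :: σ), ⟨g, h, rfl⟩, rfl⟩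
    · rintro ⟨⟨q', τ⟩, ⟨g, h, rfl⟩, rfl⟩
      refine ⟨q', g, ?_, rfl⟩
      rwa [get4_call _ _ _ _ hw]
  · simp only [symCode]
    cases σ with
    | nil =>
      have : (1 == 0) = false := rfl
      simp only [this, BEq.rfl, cond_true, cond_false, succBot, he1, hl, hn, hx1, hx2,
        List.map_nil, List.length_nil, mem_flatMap_range, mem_cond, hen]
      constructor
      · rintro ⟨q', h, rfl⟩
        rw [get3_bot _ _ _ hw] at h
        exact ⟨(q', []), Or.inr ⟨trivial, h, rfl⟩, rfl⟩
      · rintro ⟨⟨q', τ⟩, ⟨g, s, h, -⟩ | ⟨-, h, rfl⟩, rfl⟩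
        · cases h
        · refine ⟨q', ?_, rfl⟩
          rwa [get3_bot _ _ _ hw]
    | cons g σ =>
      have h1 : (1 == 0) = false := rfl
      have h2 : ((g : ℕ) :: σ.map Fin.val).length = σ.length + 1 := by simp
      have h3 : (σ.length + 1 == 0) = false := rfl
      simp only [h1, hx2, List.map_cons, h2, h3, BEq.rfl, cond_true, cond_false, succRet, he1, hl,
        hn, hx1, List.getD_cons_zero, List.tail_cons, mem_flatMap_range, mem_cond, hen]
      constructor
      · rintro ⟨q', h, rfl⟩
        rw [get4_ret _ _ _ _ hw] at h
        exact ⟨(q', σ), Or.inl ⟨g, σ, rfl, h, rfl⟩, rfl⟩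
      · rintro ⟨⟨q', τ⟩, ⟨g', s, h', h, rfl⟩ | ⟨h, -⟩, rfl⟩
        · cases h'
          refine ⟨q', ?_, rfl⟩
          rwa [get4_ret _ _ _ _ hw]
        · cases h
  · have h1 : (2 == 0) = false := rfl
    have h2 : (2 == 1) = false := rfl
    simp only [symCode, h1, h2, cond_false, succLoc, he1, hl, hn, hx1, hx2, mem_flatMap_range,
      mem_cond, hen]
    constructor
    · rintro ⟨q', h, rfl⟩
      rw [get3_loc _ _ _ hw] at h
      exact ⟨(q', σ), ⟨h, rfl⟩, rfl⟩
    · rintro ⟨⟨q', τ⟩, ⟨h, rfl⟩, rfl⟩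
      refine ⟨q', ?_, rfl⟩
      rwa [get3_loc _ _ _ hw]

theorem accs_iff {p : ℕ} {c : Fin n × List (Fin m)} :
    accs (envOf kind M w r fuel ts gl) (emb p c) = true ↔
      M.final c.1 = true ∧ TestRel ts c.1 p ∧ GoalRel gl p := by
  have : (autOf M).2.2.2.2.2.2.2.getD (c.1 : ℕ) false = M.final c.1 :=
    getD_ofFn (fun q : Fin n => M.final q) c.1 false
  rw [← this]
  simp only [accs, Bool.and_eq_true, and_assoc]
  rfl

/-- The iteration of `succs` finds all runs. -/
theorem iterate_iff (hw : ∀ p, p < w.length → w.getD p 0 < 2 ^ P) (hr : r < w.length) {s : ℕ} :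
    ∀ {L : List Conf}, (∀ y ∈ L, ∃ p c, p < w.length ∧ y = emb (n := n) (m := m) p c) →
      (((fun L : List Conf => L.flatMap (succs (envOf kind M w r fuel ts gl)))^[s] L).any
        (accs (envOf kind M w r fuel ts gl)) = true ↔
      ∃ p c, p < w.length ∧ emb p c ∈ L ∧
        PAcc kind M (fun p => letterOf P (w.getD p 0)) (TestRel ts) (GoalRel gl) (nxt w.length r) s p c) := by
  induction s with
  | zero =>
    intro L hL
    simp only [Function.iterate_zero, id, List.any_eq_true]
    constructor
    · rintro ⟨y, hy, h⟩
      obtain ⟨p, c, hp, rfl⟩ := hL y hy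
      exact ⟨p, c, hp, hy, accs_iff.1 h⟩
    · rintro ⟨p, c, hp, hy, h⟩
      exact ⟨_, hy, accs_iff.2 h⟩
  | succ s ih =>
    intro L hL
    rw [Function.iterate_succ_apply, ih]
    · constructor
      · rintro ⟨p, c, hp, hy, h⟩
        obtain ⟨x, hx, hy⟩ := List.mem_flatMap.1 hy
        obtain ⟨p', c', hp', rfl⟩ := hL x hx
        obtain ⟨ht, c'', hc, he⟩ := (mem_succs (hw _ hp')).1 hy
        obtain ⟨h1, h2, h3⟩ : c.1 = c''.1 ∧ p = nxt w.length r p' ∧ c.2 = c''.2 := by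
          simp only [emb, Prod.mk.injEq] at he
          exact ⟨Fin.ext he.1, he.2.1,
            List.map_injective_iff.2 Fin.val_injective he.2.2⟩
        obtain rfl : c = c'' := Prod.ext h1 h3
        subst h2
        exact ⟨p', c', hp', hx, ht, c, hc, h⟩
      · rintro ⟨p, c, hp, hy, ht, c', hc, h⟩
        exact ⟨_, c', nxt_lt hr p, List.mem_flatMap.2 ⟨_, hy,
          (mem_succs (hw _ hp)).2 ⟨ht, c', hc, rfl⟩⟩, h⟩
    · intro y hy
      obtain ⟨x, hx, hy⟩ := List.mem_flatMap.1 hy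
      obtain ⟨p', c', hp', rfl⟩ := hL x hx
      obtain ⟨-, c'', -, rfl⟩ := (mem_succs (hw _ hp')).1 hy
      exact ⟨_, c'', nxt_lt hr p', rfl⟩

theorem mem_inits {k : ℕ} {y : Conf} : y ∈ inits (envOf kind M w r fuel ts gl) k ↔
    ∃ q, M.start q = true ∧ y = emb (m := m) k (q, []) := by
  have h : ∀ q : Fin n, (autOf M).2.2.2.2.2.2.1.getD (q : ℕ) false = M.start q :=
    fun q => getD_ofFn (fun q : Fin n => M.start q) q false
  simp only [← h]
  unfold inits
  rw [mem_flatMap_range]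
  simp only [mem_cond]
  rfl

/-- By `pacc_bound`, trying all lengths up to `fuel` suffices for finding an accepting run. -/
theorem search_iff (hw : ∀ p, p < w.length → w.getD p 0 < 2 ^ P) (hr : r < w.length)
    (hf : rbound n w.length ≤ fuel) {k : ℕ} (hk : k < w.length) :
    search (envOf kind M w r fuel ts gl) k = true ↔ ∃ s q, M.start q = true ∧
      PAcc kind M (fun p => letterOf P (w.getD p 0)) (TestRel ts) (GoalRel gl) (nxt w.length r) s k
        (q, []) := by
  have hL : ∀ y ∈ inits (envOf kind M w r fuel ts gl) k,
      ∃ p c, p < w.length ∧ y = emb (n := n) (m := m) p c := by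
    intro y hy
    obtain ⟨q, -, rfl⟩ := mem_inits.1 hy
    exact ⟨k, _, hk, rfl⟩
  have hfu : (envOf kind M w r fuel ts gl).1.2.2.2 = fuel := rfl
  rw [search, List.any_eq_true, hfu]
  constructor
  · rintro ⟨s, -, h⟩
    obtain ⟨p, ⟨q, σ⟩, hp, hy, h⟩ := (iterate_iff hw hr hL).1 h
    obtain ⟨q', hq, he⟩ := mem_inits.1 hy
    simp only [emb, Prod.mk.injEq, List.map_nil, List.map_eq_nil_iff] at he
    obtain ⟨h1, rfl, rfl⟩ := he
    obtain rfl := Fin.ext h1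
    exact ⟨s, q, hq, h⟩
  · rintro ⟨s, q, hq, h⟩
    obtain ⟨s', hs', h⟩ := pacc_bound (fun p _ => nxt_lt hr p) hk h
    exact ⟨s', List.mem_range.2 (by omega),
      (iterate_iff hw hr hL).2 ⟨k, _, hk, mem_inits.2 ⟨q, hq, rfl⟩, h⟩⟩

end Step

theorem lt_pair_of_lt {a b x y : ℕ} (h : x < a) (hy : y ≤ b) : y < Nat.pair a b := by
  have := Nat.add_le_pair a b
  omega

theorem rbound_mono {n n' : ℕ} (K : ℕ) (h : n ≤ n') : rbound n K ≤ rbound n' K := by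
  have h1 : n * K ≤ n' * K := Nat.mul_le_mul_right K h
  have h2 : (2 ^ (n * K)) ^ (n * K) ≤ (2 ^ (n' * K)) ^ (n' * K) :=
    (Nat.pow_le_pow_left (Nat.pow_le_pow_right (by norm_num) h1) _).trans
      (Nat.pow_le_pow_right (by positivity) h1)
  exact Nat.mul_le_mul_left _ (Nat.pow_le_pow_right (by norm_num) (by omega))

theorem testBit_iff (i v : ℕ) : ((i / 2 ^ v) % 2 == 1) = i.testBit v := by
  rw [Nat.testBit_eq_decide_div_mod_eq]; rfl

theorem sum_add_length_le_encode (l : List ℕ) : l.sum + l.length ≤ Encodable.encode l := by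
  induction l with
  | nil => simp
  | cons a l ih =>
    rw [Encodable.encode_list_cons, List.sum_cons, List.length_cons]
    have := Nat.add_le_pair (Encodable.encode a) (Encodable.encode l)
    have h : Encodable.encode a = a := rfl
    omega

theorem le_codeP {P n m : ℕ} (M : VPAData (Fin P → Bool) n m) : n ≤ M.codeP := by
  rw [VPAData.codeP, Encodable.encode_prod_val]
  exact Nat.left_le_pair _ _

theorem sum_ofFn_le {n : ℕ} {f g : Fin n → ℕ} (h : ∀ i, f i ≤ g i + 1) :
    (List.ofFn f).sum ≤ (List.ofFn g).sum + n := by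
  rw [List.sum_ofFn, List.sum_ofFn]
  calc ∑ i, f i ≤ ∑ i, (g i + 1) := Finset.sum_le_sum fun i _ => h i
    _ = _ := by simp [Finset.sum_add_distrib]

/-- Codes bound sizes, so that a bound computed from the code of a formula applies to it. -/
theorem size_le_code {P : ℕ} (φ : VLDL (Fin P) (Fin P → Bool)) : φ.size ≤ φ.code + 1 := by
  have key : ∀ (n m : ℕ) (M : VPAData (Fin P → Bool) n m)
      (t : Fin n → VLDL (Fin P) (Fin P → Bool)) (φ : VLDL (Fin P) (Fin P → Bool)) (j : ℕ),
      4 ≤ j → (∀ q, (t q).size ≤ (t q).code + 1) → φ.size ≤ φ.code + 1 →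
      φ.size + n + 1 + (List.ofFn (fun q => (t q).size)).sum ≤ Nat.pair j (Nat.pair M.codeP
        (Nat.pair (Encodable.encode (List.ofFn (fun q => (t q).code))) φ.code)) + 1 := by
    intro n m M t φ j hj ht hφ
    have h1 := Nat.add_le_pair j (Nat.pair M.codeP
        (Nat.pair (Encodable.encode (List.ofFn (fun q => (t q).code))) φ.code))
    have h2 := Nat.add_le_pair M.codeP
        (Nat.pair (Encodable.encode (List.ofFn (fun q => (t q).code))) φ.code)
    have h3 := Nat.add_le_pair (Encodable.encode (List.ofFn (fun q => (t q).code))) φ.code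
    have h4 := sum_add_length_le_encode (List.ofFn (fun q => (t q).code))
    have h5 := sum_ofFn_le ht
    have h6 := le_codeP M
    rw [List.length_ofFn] at h4
    omega
  induction φ with
  | atom v => simp [VLDL.size]
  | neg φ ih =>
    have := Nat.add_le_pair 1 φ.code
    simp only [VLDL.size, VLDL.code]; omega
  | and φ ψ ih1 ih2 =>
    have := Nat.add_le_pair 2 (Nat.pair φ.code ψ.code)
    have := Nat.add_le_pair φ.code ψ.code
    simp only [VLDL.size, VLDL.code]; omega
  | or φ ψ ih1 ih2 =>
    have := Nat.add_le_pair 3 (Nat.pair φ.code ψ.code)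
    have := Nat.add_le_pair φ.code ψ.code
    simp only [VLDL.size, VLDL.code]; omega
  | dia n m M t φ ht hφ => exact key n m M t φ 4 (by norm_num) ht hφ
  | box n m M t φ ht hφ => exact key n m M t φ 5 (by norm_num) ht hφ

section Table

variable {P : ℕ} {kind : (Fin P → Bool) → SymKind} {w : List ℕ} {r fuel : ℕ}

/-- The truth value at position `p` of the formula with code `i`, as computed by `table`. -/
def TV (kind : (Fin P → Bool) → SymKind) (w : List ℕ) (r fuel i p : ℕ) : Prop :=
  (table (kindsOf kind, w, r, fuel) i).getD p false = true

theorem code_le_encode {n : ℕ} (f : Fin n → ℕ) (q : Fin n) :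
    f q ≤ Encodable.encode (List.ofFn f) := by
  have h1 := sum_add_length_le_encode (List.ofFn f)
  have h2 : f q ≤ (List.ofFn f).sum := List.le_sum_of_mem (by simp)
  omega

/-- The truth tables of the tests are read off from the list of all previous truth tables. -/
theorem tests_getD {c : Ctx} {n i : ℕ} {f : Fin n → ℕ} (h : ∀ q, f q < i) (q : Fin n) :
    (tests (build c i) (Encodable.encode (List.ofFn f))).getD q [] = table c (f q) := by
  have : decList (Encodable.encode (List.ofFn f)) = List.ofFn f := by
    rw [decList, Encodable.encodek]; rfl
  rw [tests, this, List.map_ofFn, getD_ofFn]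
  exact build_getD c (h q)

theorem tabNot_getD (c : Ctx) (t : List Bool) {k : ℕ} (hk : k < c.2.1.length) :
    (tabNot c t).getD k false = true ↔ ¬ t.getD k false = true := by
  rw [tabNot, getD_range_map hk]; simp

theorem tabDia_getD (c : Ctx) (i : ℕ) (ts : List (List Bool)) (gl : List Bool) {k : ℕ}
    (hk : k < c.2.1.length) :
    (tabDia c i ts gl).getD k false = search (c, decAut i, ts, gl) k := by
  rw [tabDia, getD_range_map hk]

/-- Evaluation of a diamond by `tabDia`, provided that the truth tables of the tests and of the
goal are correct. -/
theorem tabDia_iff {n m : ℕ} (M : VPAData (Fin P → Bool) n m)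
    (hw : ∀ p, p < w.length → w.getD p 0 < 2 ^ P) (hr : r < w.length)
    (hf : rbound n w.length ≤ fuel) {k : ℕ} (hk : k < w.length) {ts : List (List Bool)}
    {gl : List Bool} {T : Fin n → ℕ → Prop} {G : ℕ → Prop} (i : ℕ)
    (hT : ∀ q i, T q i ↔ TestRel ts q ((nxt w.length r)^[i] k))
    (hG : ∀ i, G i ↔ (gl.getD ((nxt w.length r)^[i] k) false = true)) :
    (tabDia (kindsOf kind, w, r, fuel) M.codeP ts gl).getD ((nxt w.length r)^[i] k) false = true ↔
      ∃ s q, M.start q = true ∧ Acc kind M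
        (fun i => letterOf P (w.getD ((nxt w.length r)^[i] k) 0)) T G s i (q, []) := by
  have hp := nxt_iterate_lt hr hk i
  have hT' : T = fun q i => TestRel ts q ((nxt w.length r)^[i] k) := by
    funext q i; exact propext (hT q i)
  have hG' : G = fun i => GoalRel gl ((nxt w.length r)^[i] k) := by
    funext i; exact propext (hG i)
  rw [tabDia_getD _ _ _ _ hp, decAut_codeP, hT', hG']
  refine (search_iff (fuel := fuel) hw hr hf hp).trans ?_
  refine exists_congr fun s => exists_congr fun q => and_congr_right fun _ => ?_
  exact (acc_iff_pacc (pos := fun i => (nxt w.length r)^[i] k)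
    (a := fun p => letterOf P (w.getD p 0)) (T := TestRel ts) (G := GoalRel gl)
    fun i => Function.iterate_succ_apply' _ _ _).symm

theorem lw_letterOf (hr : r < w.length) {k : ℕ} (hk : k < w.length) (b : Fin P → Bool) :
    lw (w.map (letterOf P)) b r k =
      fun i => letterOf P (w.getD ((nxt w.length r)^[i] k) 0) := by
  funext i
  have := nxt_iterate_lt hr hk i
  simp only [lw, List.length_map]
  simp [List.getD, this]

/-- The truth tables computed by the algorithm are correct. -/
theorem sat_iff_table (hw : ∀ p, p < w.length → w.getD p 0 < 2 ^ P) (hr : r < w.length)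
    {N k : ℕ} (hk : k < w.length) (φ : VLDL (Fin P) (Fin P → Bool)) (hN : φ.size ≤ N) :
    ∀ i, VLDL.sat (fun v a => a v = true) kind φ
        (fun i => letterOf P (w.getD ((nxt w.length r)^[i] k) 0)) i ↔
      (table (kindsOf kind, w, r, rbound N w.length) φ.code).getD ((nxt w.length r)^[i] k) false
        = true := by
  set c : Ctx := (kindsOf kind, w, r, rbound N w.length) with hc
  have hlen : c.2.1.length = w.length := rfl
  have hlt : ∀ i, (nxt w.length r)^[i] k < c.2.1.length := fun i => nxt_iterate_lt hr hk i
  induction φ with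
  | atom v =>
    intro i
    have : table c (VLDL.atom v : VLDL (Fin P) (Fin P → Bool)).code = tabAtom c v := by
      simp [table, bodyAt, VLDL.code]
    rw [this]
    have h := hlt i
    simp only [VLDL.sat, tabAtom, testBit_iff, letterOf, List.getD, List.getElem?_map]
    rw [hlen] at h
    simp [hc, h]
  | neg φ ih =>
    intro i
    have h1 := Nat.add_le_pair 1 φ.code
    have : table c (VLDL.neg φ).code = tabNot c (table c φ.code) := by
      rw [← build_getD c (i := (VLDL.neg φ).code) (j := φ.code) (by rw [VLDL.code]; omega)]
      simp [table, bodyAt, VLDL.code]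
    rw [this, tabNot_getD _ _ (hlt i), ← ih (by rw [VLDL.size] at hN; omega) i]
    rfl
  | and φ ψ ih1 ih2 =>
    intro i
    have h1 := Nat.add_le_pair 2 (Nat.pair φ.code ψ.code)
    have h2 := Nat.add_le_pair φ.code ψ.code
    have : table c (VLDL.and φ ψ).code = tabAnd c (table c φ.code) (table c ψ.code) := by
      rw [← build_getD c (i := (VLDL.and φ ψ).code) (j := φ.code) (by rw [VLDL.code]; omega),
        ← build_getD c (i := (VLDL.and φ ψ).code) (j := ψ.code) (by rw [VLDL.code]; omega)]
      simp [table, bodyAt, VLDL.code]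
    rw [VLDL.size] at hN
    rw [this, tabAnd, getD_range_map (hlt i), Bool.and_eq_true, ← ih1 (by omega) i,
      ← ih2 (by omega) i]
    rfl
  | or φ ψ ih1 ih2 =>
    intro i
    have h1 := Nat.add_le_pair 3 (Nat.pair φ.code ψ.code)
    have h2 := Nat.add_le_pair φ.code ψ.code
    have : table c (VLDL.or φ ψ).code = tabOr c (table c φ.code) (table c ψ.code) := by
      rw [← build_getD c (i := (VLDL.or φ ψ).code) (j := φ.code) (by rw [VLDL.code]; omega),
        ← build_getD c (i := (VLDL.or φ ψ).code) (j := ψ.code) (by rw [VLDL.code]; omega)]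
      simp [table, bodyAt, VLDL.code]
    rw [VLDL.size] at hN
    rw [this, tabOr, getD_range_map (hlt i), Bool.or_eq_true, ← ih1 (by omega) i,
      ← ih2 (by omega) i]
    rfl
  | dia n m M t φ iht ihφ =>
    intro i
    set x := (VLDL.dia n m M t φ).code with hx
    have h1 := Nat.add_le_pair 4 (Nat.pair M.codeP
        (Nat.pair (Encodable.encode (List.ofFn (fun q => (t q).code))) φ.code))
    have h2 := Nat.add_le_pair M.codeP
        (Nat.pair (Encodable.encode (List.ofFn (fun q => (t q).code))) φ.code)
    have h3 := Nat.add_le_pair (Encodable.encode (List.ofFn (fun q => (t q).code))) φ.code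
    have h4 := code_le_encode fun q => (t q).code
    have hφ : φ.code < x := by rw [hx, VLDL.code]; omega
    have ht : ∀ q, (t q).code < x := fun q => by have := h4 q; rw [hx, VLDL.code]; omega
    have : table c x = tabDia c M.codeP
        (tests (build c x) (Encodable.encode (List.ofFn (fun q => (t q).code))))
        (table c φ.code) := by
      rw [← build_getD c hφ, table, bodyAt]
      simp [hx, VLDL.code]
    rw [VLDL.size] at hN
    have hs := fun q => List.le_sum_of_mem (xs := List.ofFn (fun q => (t q).size))
      (x := (t q).size) (by simp)
    rw [this, sat_dia_iff]
    refine (tabDia_iff M hw hr (rbound_mono _ (by omega)) hk i (fun q i => ?_)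
      (fun i => ihφ (by omega) i)).symm
    rw [TestRel, tests_getD ht]
    exact iht q (by have := hs q; omega) i
  | box n m M t φ iht ihφ =>
    intro i
    set x := (VLDL.box n m M t φ).code with hx
    have h1 := Nat.add_le_pair 5 (Nat.pair M.codeP
        (Nat.pair (Encodable.encode (List.ofFn (fun q => (t q).code))) φ.code))
    have h2 := Nat.add_le_pair M.codeP
        (Nat.pair (Encodable.encode (List.ofFn (fun q => (t q).code))) φ.code)
    have h3 := Nat.add_le_pair (Encodable.encode (List.ofFn (fun q => (t q).code))) φ.code
    have h4 := code_le_encode fun q => (t q).code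
    have hφ : φ.code < x := by rw [hx, VLDL.code]; omega
    have ht : ∀ q, (t q).code < x := fun q => by have := h4 q; rw [hx, VLDL.code]; omega
    have : table c x = tabNot c (tabDia c M.codeP
        (tests (build c x) (Encodable.encode (List.ofFn (fun q => (t q).code))))
        (tabNot c (table c φ.code))) := by
      rw [← build_getD c hφ, table, bodyAt]
      simp [hx, VLDL.code]
    rw [VLDL.size] at hN
    have hs := fun q => List.le_sum_of_mem (xs := List.ofFn (fun q => (t q).size))
      (x := (t q).size) (by simp)
    rw [this, sat_box_iff, tabNot_getD _ _ (hlt i)]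
    refine not_congr (tabDia_iff M hw hr (rbound_mono _ (by omega)) hk i (fun q i => ?_)
      (fun i => ?_)).symm
    · rw [TestRel, tests_getD ht]
      exact iht q (by have := hs q; omega) i
    · rw [tabNot_getD _ _ (hlt i)]
      exact not_congr (ihφ (by omega) i)

/-- Every letter is encoded by a bitmask. -/
theorem exists_letterOf (P : ℕ) (a : Fin P → Bool) : ∃ i < 2 ^ P, letterOf P i = a :=
  ⟨Nat.ofBits a, Nat.ofBits_lt_two_pow a, funext fun j => Nat.testBit_ofBits_lt a j j.isLt⟩

theorem mem_words {L : ℕ} : ∀ {w : List ℕ},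
    w ∈ words P L ↔ w.length = L ∧ ∀ i ∈ w, i < 2 ^ P := by
  induction L with
  | zero => intro w; simp only [words, Function.iterate_zero, id, List.mem_singleton]
            constructor
            · rintro rfl; simp
            · rintro ⟨h, -⟩; exact List.length_eq_zero_iff.1 h
  | succ L ih =>
    intro w
    have : words P (L + 1) =
        (words P L).flatMap fun l => (List.range (2 ^ P)).map fun i => i :: l := by
      unfold words; rw [Function.iterate_succ_apply']
    rw [this]
    simp only [List.mem_flatMap, List.mem_map, List.mem_range, ih]
    constructor
    · rintro ⟨l, ⟨rfl, h⟩, i, hi, rfl⟩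
      exact ⟨rfl, by simpa using ⟨hi, h⟩⟩
    · rintro ⟨hl, h⟩
      cases w with
      | nil => cases hl
      | cons i l =>
        simp only [List.mem_cons, forall_eq_or_imp] at h
        exact ⟨l, ⟨by simpa using hl, h.2⟩, i, h.1, rfl⟩

theorem getD_lt (hw : ∀ i ∈ w, i < 2 ^ P) {p : ℕ} (hp : p < w.length) :
    w.getD p 0 < 2 ^ P := by
  have : w.getD p 0 = w[p] := by simp [List.getD, hp]
  rw [this]; exact hw _ (List.getElem_mem hp)

theorem sat_of_checkWord (hw : ∀ i ∈ w, i < 2 ^ P) {φ : VLDL (Fin P) (Fin P → Bool)}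
    (h : checkWord (kindsOf kind) w φ.code = true) (hr : r < w.length) {k : ℕ}
    (hk : k < w.length) (i : ℕ) :
    VLDL.sat (fun v a => a v = true) kind φ
      (fun i => letterOf P (w.getD ((nxt w.length r)^[i] k) 0)) i := by
  simp only [checkWord, List.all_eq_true, List.mem_range] at h
  rw [sat_iff_table (fun p hp => getD_lt hw hp) hr hk φ (size_le_code φ)]
  exact h r hr _ (nxt_iterate_lt hr hk i)

theorem checkWord_of_valid (hw : ∀ i ∈ w, i < 2 ^ P) {φ : VLDL (Fin P) (Fin P → Bool)}
    (h : ∀ α : ℕ → (Fin P → Bool), VLDL.sat (fun v a => a v = true) kind φ α 0) :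
    checkWord (kindsOf kind) w φ.code = true := by
  simp only [checkWord, List.all_eq_true, List.mem_range]
  intro r hr k hk
  exact (sat_iff_table (fun p hp => getD_lt hw hp) hr hk φ (size_le_code φ) 0).1 (h _)

theorem decideCode_iff (kind : (Fin P → Bool) → SymKind) (φ : VLDL (Fin P) (Fin P → Bool)) :
    decideCode (Nat.pair P (Nat.pair (kindCode P kind) φ.code)) = true ↔
      ∀ α : ℕ → (Fin P → Bool), VLDL.sat (fun v a => a v = true) kind φ α 0 := by
  simp only [decideCode, Nat.unpair_pair, decList_kindCode, decideValid, List.all_eq_true,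
    List.mem_range, mem_words]
  constructor
  · intro h α
    by_contra hα
    obtain ⟨w, r, j, hr, hw, hj, hsat⟩ := small_countermodel (size_le_code φ) hα
    choose f hf1 hf2 using exists_letterOf P
    have hmap : (w.map f).map (letterOf P) = w := by
      rw [List.map_map]
      conv_rhs => rw [← List.map_id w]
      exact List.map_congr_left fun a _ => hf2 a
    have hmem : ∀ i ∈ w.map f, i < 2 ^ P := by
      intro i hi
      obtain ⟨a, -, rfl⟩ := List.mem_map.1 hi
      exact hf1 a
    have hlen : (w.map f).length = w.length := List.length_map _
    have h1 := sat_of_checkWord (r := r) (k := 0) hmem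
      (h w.length (by omega) (w.map f) ⟨hlen, hmem⟩) (by omega) (by omega) j
    refine hsat (fun _ => false) ?_
    rwa [← lw_letterOf (by omega) (by omega) (fun _ => false), hmap] at h1
  · rintro h L - w ⟨-, hw⟩
    exact checkWord_of_valid hw h

end Table

end Correct

end VP

/-- The validity problem for VLDL is decidable: there is a computable
function that, given the encoding of the number `p` of atomic propositions, of a
partition of `2^P` into calls, returns and local actions, and of a VLDL formula `φ`
over this pushdown alphabet, decides whether every infinite word over `2^P` is a model
of `φ`. -/
theorem vldl_validity_decidable :
    ∃ f : ℕ → Bool, Computable f ∧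
      ∀ (p : ℕ) (kind : (Fin p → Bool) → SymKind) (φ : VLDL (Fin p) (Fin p → Bool)),
        (f (Nat.pair p (Nat.pair (kindCode p kind) φ.code)) = true ↔
          ∀ α : ℕ → (Fin p → Bool), VLDL.sat (fun v a => a v = true) kind φ α 0) := by
  exact ⟨VP.decideCode, VP.computable_decideCode, fun _ kind φ => VP.decideCode_iff kind φ⟩
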